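/- For every positive integer k there exist constants C, D > 0 depending only on k with the following property: let α : G_1 × ⋯ × G_k → 𝔽^r be a multiaffine map, let S ⊆ 𝔽^r and let ε > 0. Define the set of ε-dense columns X = {x ∈ G_1 × ⋯ × G_{k−1} : |{y ∈ G_k : α(x, y) ∈ S}| ≥ ε·|G_k|}. Then there exist s ≤ C·(r·log_{|𝔽|}(|𝔽|·ε^{-1}))^D and a multiaffine map β : G_1 × ⋯ × G_{k−1} → 𝔽^s such that the layers of β both internally ε-approximate and externally ε-approximate X. -/

import Mathlib

/-- A map `f : G 0 × ⋯ × G (k-1) → H` between `𝔽`-vector spaces is *multiaffine*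
if it is affine in each coordinate separately, i.e. fixing all coordinates but the
`i`-th one yields a map of the form `y ↦ g y + h` with `g` linear. -/
def IsMultiaffine (𝔽 : Type*) [Field 𝔽] {ι : Type*} [DecidableEq ι] {G : ι → Type*}
    [∀ i, AddCommGroup (G i)] [∀ i, Module 𝔽 (G i)]
    {H : Type*} [AddCommGroup H] [Module 𝔽 H] (f : (∀ i, G i) → H) : Prop :=
  ∀ (i : ι) (x : ∀ j, G j), ∃ (g : G i →ₗ[𝔽] H) (h : H),
    ∀ y : G i, f (Function.update x i y) = g y + h

section helpers
open Finset Function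

set_option linter.unusedSectionVars false

/-! ### Polynomially bounded functions -/

/-- A function of naturals bounded by a power of `t + 2`. -/
def PolyB (p : ℕ → ℕ) : Prop := ∃ a : ℕ, ∀ t, p t ≤ (t + 2) ^ a

theorem PolyB.const (c : ℕ) : PolyB (fun _ => c) := by
  refine ⟨c, fun t => ?_⟩
  calc c ≤ 2 ^ c := Nat.lt_two_pow_self.le
    _ ≤ (t + 2) ^ c := Nat.pow_le_pow_left (by omega) _

theorem PolyB.id : PolyB (fun t => t) := ⟨1, fun t => by simp⟩

theorem PolyB.mul {p r : ℕ → ℕ} (hp : PolyB p) (hr : PolyB r) : PolyB (fun t => p t * r t) := by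
  obtain ⟨a, ha⟩ := hp
  obtain ⟨b, hb⟩ := hr
  exact ⟨a + b, fun t => by rw [pow_add]; exact Nat.mul_le_mul (ha t) (hb t)⟩

theorem PolyB.add {p r : ℕ → ℕ} (hp : PolyB p) (hr : PolyB r) : PolyB (fun t => p t + r t) := by
  obtain ⟨a, ha⟩ := hp
  obtain ⟨b, hb⟩ := hr
  refine ⟨a + b + 1, fun t => ?_⟩
  have h1 : (t + 2) ^ a ≤ (t + 2) ^ (a + b) := Nat.pow_le_pow_right (by omega) (by omega)
  have h2 : (t + 2) ^ b ≤ (t + 2) ^ (a + b) := Nat.pow_le_pow_right (by omega) (by omega)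
  have := ha t
  have := hb t
  rw [pow_succ]
  nlinarith

theorem PolyB.pow {p : ℕ → ℕ} (hp : PolyB p) (n : ℕ) : PolyB (fun t => p t ^ n) := by
  obtain ⟨a, ha⟩ := hp
  exact ⟨a * n, fun t => by rw [pow_mul]; exact Nat.pow_le_pow_left (ha t) n⟩

theorem PolyB.comp {p r : ℕ → ℕ} (hp : PolyB p) (hr : PolyB r) : PolyB (fun t => p (r t)) := by
  obtain ⟨a, ha⟩ := hp
  obtain ⟨b, hb⟩ := (hr.add (PolyB.const 2))
  exact ⟨b * a, fun t => by
    rw [pow_mul]; exact (ha _).trans (Nat.pow_le_pow_left (hb t) a)⟩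

/-! ### Counting -/

open Classical in
/-- Number of elements satisfying a predicate. -/
noncomputable def cnt {X : Type} [Fintype X] (P : X → Prop) : ℕ := (univ.filter P).card

open Classical in
theorem cnt_eq_sum {X : Type} [Fintype X] (P : X → Prop) :
    cnt P = ∑ x, if P x then 1 else 0 := by
  simp [cnt]

theorem cnt_mono {X : Type} [Fintype X] {P Q : X → Prop} (h : ∀ x, P x → Q x) :
    cnt P ≤ cnt Q := by
  classical
  unfold cnt
  apply Finset.card_le_card
  intro x
  simpa using h x

theorem cnt_congr {X : Type} [Fintype X] {P Q : X → Prop} (h : ∀ x, P x ↔ Q x) :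
    cnt P = cnt Q := le_antisymm (cnt_mono fun x => (h x).1) (cnt_mono fun x => (h x).2)

theorem cnt_le_card {X : Type} [Fintype X] (P : X → Prop) : cnt P ≤ Fintype.card X := by
  classical
  exact Finset.card_le_univ _

theorem cnt_or {X : Type} [Fintype X] (P Q : X → Prop) :
    cnt (fun x => P x ∨ Q x) ≤ cnt P + cnt Q := by
  classical
  unfold cnt
  refine le_trans (Finset.card_le_card ?_) (Finset.card_union_le _ _)
  intro x
  simp

theorem cnt_exists {X Y : Type} [Fintype X] [Fintype Y] (P : Y → X → Prop) :
    cnt (fun x => ∃ y, P y x) ≤ ∑ y, cnt (P y) := by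
  classical
  unfold cnt
  refine le_trans (Finset.card_le_card ?_) (Finset.card_biUnion_le)
  intro x
  simp

theorem cnt_true {X : Type} [Fintype X] {P : X → Prop} (h : ∀ x, P x) :
    cnt P = Fintype.card X := by
  classical
  simp [cnt, h]

theorem cnt_eq_natCard {X : Type} [Fintype X] (P : X → Prop) : cnt P = Nat.card {x // P x} := by
  classical
  rw [Nat.card_eq_fintype_card, Fintype.card_subtype]; rfl

theorem cnt_inj {X Y : Type} [Fintype X] [Fintype Y] {P : X → Prop} {Q : Y → Prop} (φ : X → Y)
    (hφ : Injective φ) (h : ∀ x, P x → Q (φ x)) : cnt P ≤ cnt Q := by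
  classical
  unfold cnt
  refine Finset.card_le_card_of_injOn φ ?_ hφ.injOn
  intro x
  simpa using h x

section upd
variable {ι : Type} [Fintype ι] [DecidableEq ι] {G : ι → Type} [∀ i, Fintype (G i)]

/-- Averaging over one coordinate. -/
theorem sum_update (i : ι) (f : (∀ i, G i) → ℕ) :
    ∑ x, ∑ a : G i, f (update x i a) = Fintype.card (G i) * ∑ x, f x := by
  classical
  let e : ((∀ i, G i) × G i) ≃ ((∀ i, G i) × G i) :=
    { toFun := fun p => (update p.1 i p.2, p.1 i)
      invFun := fun p => (update p.1 i p.2, p.1 i)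
      left_inv := fun p => by simp
      right_inv := fun p => by simp }
  rw [← Fintype.sum_prod_type' (f := fun x (a : G i) => f (update x i a))]
  refine (Equiv.sum_comp e (fun p => f p.1)).trans ?_
  rw [Fintype.sum_prod_type]
  simp [Finset.mul_sum]

theorem sum_cnt_update (i : ι) (P : (∀ i, G i) → Prop) :
    ∑ x, cnt (fun a : G i => P (update x i a)) = Fintype.card (G i) * cnt P := by
  classical
  rw [cnt_eq_sum, ← sum_update i]
  simp_rw [cnt_eq_sum]

theorem sum_cnt_update' (i : ι) (P : (∀ i, G i) → Prop) :
    ∑ a : G i, cnt (fun x => P (update x i a)) = Fintype.card (G i) * cnt P := by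
  classical
  rw [← sum_cnt_update]
  simp_rw [cnt_eq_sum]
  rw [Finset.sum_comm]

end upd

section dep
variable {ι : Type} [Fintype ι] [DecidableEq ι] {G : ι → Type}

/-- A function that ignores coordinates outside `J` only depends on coordinates in `J`. -/
theorem dep_eq {Y : Type*} (J : Finset ι) (f : (∀ i, G i) → Y)
    (hf : ∀ i ∉ J, ∀ x a, f (update x i a) = f x) (x y : ∀ i, G i) (hxy : ∀ i ∈ J, x i = y i) :
    f x = f y := by
  classical
  have key : ∀ K : Finset ι, (Disjoint K J) → f (K.piecewise x y) = f y := by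
    intro K
    induction K using Finset.induction_on with
    | empty => intro _; simp
    | insert i K hi ih =>
      intro h
      rw [Finset.disjoint_insert_left] at h
      rw [Finset.piecewise_insert, hf i h.1, ih h.2]
  have h1 := key (univ \ J) Finset.sdiff_disjoint
  rw [← h1]
  congr 1
  funext i
  by_cases hi : i ∈ J
  · simp [hi, hxy i hi]
  · simp [hi]

end dep

section ML
variable {F : Type} [Field F] {ι : Type} [DecidableEq ι] {G : ι → Type}
  [∀ i, AddCommGroup (G i)] [∀ i, Module F (G i)]
  {W : Type} [AddCommGroup W] [Module F W]

/-- `f` is linear in each coordinate of `I` and does not depend on other coordinates. -/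
structure ML (F : Type) [Field F] {ι : Type} [DecidableEq ι] {G : ι → Type}
    [∀ i, AddCommGroup (G i)] [∀ i, Module F (G i)]
    {W : Type} [AddCommGroup W] [Module F W] (I : Finset ι) (f : (∀ i, G i) → W) : Prop where
  add : ∀ i ∈ I, ∀ x a b, f (update x i (a + b)) = f (update x i a) + f (update x i b)
  smul : ∀ i ∈ I, ∀ x (c : F) a, f (update x i (c • a)) = c • f (update x i a)
  indep : ∀ i ∉ I, ∀ x a, f (update x i a) = f x

/-- the linear map in one coordinate -/
def ML.lin {I : Finset ι} {f : (∀ i, G i) → W} (h : ML F I f) {i : ι} (hi : i ∈ I)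
    (x : ∀ i, G i) : G i →ₗ[F] W where
  toFun a := f (update x i a)
  map_add' := h.add i hi x
  map_smul' := h.smul i hi x

@[simp] theorem ML.lin_apply {I : Finset ι} {f : (∀ i, G i) → W} (h : ML F I f) {i : ι}
    (hi : i ∈ I) (x : ∀ i, G i) (a : G i) : h.lin hi x a = f (update x i a) := rfl

theorem ML.zero (I : Finset ι) : ML F I (fun _ : (∀ i, G i) => (0 : W)) :=
  ⟨by simp, by simp, by simp⟩

theorem ML.add' {I : Finset ι} {f g : (∀ i, G i) → W} (hf : ML F I f) (hg : ML F I g) :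
    ML F I (fun x => f x + g x) where
  add i hi x a b := by rw [hf.add i hi, hg.add i hi]; abel
  smul i hi x c a := by rw [hf.smul i hi, hg.smul i hi, smul_add]
  indep i hi x a := by rw [hf.indep i hi, hg.indep i hi]

theorem ML.const_smul {I : Finset ι} {f : (∀ i, G i) → W} (hf : ML F I f) (r : F) :
    ML F I (fun x => r • f x) where
  add i hi x a b := by rw [hf.add i hi, smul_add]
  smul i hi x c a := by rw [hf.smul i hi, smul_comm]
  indep i hi x a := by rw [hf.indep i hi]

theorem ML.sum {κ : Type} {I : Finset ι} (s : Finset κ) {f : κ → (∀ i, G i) → W}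
    (hf : ∀ k ∈ s, ML F I (f k)) : ML F I (fun x => ∑ k ∈ s, f k x) := by
  classical
  induction s using Finset.induction_on with
  | empty => simpa using ML.zero I
  | insert k s hk ih =>
    simp_rw [Finset.sum_insert hk]
    exact (hf k (by simp)).add' (ih fun k hk => hf k (by simp [hk]))

theorem ML.comp_lin {W' : Type} [AddCommGroup W'] [Module F W'] {I : Finset ι}
    {f : (∀ i, G i) → W} (hf : ML F I f) (φ : W →ₗ[F] W') : ML F I (fun x => φ (f x)) where
  add i hi x a b := by rw [hf.add i hi, map_add]
  smul i hi x c a := by rw [hf.smul i hi, map_smul]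
  indep i hi x a := by rw [hf.indep i hi]

theorem ML.smul' {A B : Finset ι} {h : (∀ i, G i) → F} {f : (∀ i, G i) → W}
    (hh : ML F A h) (hf : ML F B f) (hd : Disjoint A B) : ML F (A ∪ B) (fun x => h x • f x) where
  add i hi x a b := by
    rw [Finset.mem_union] at hi
    rcases hi with hi | hi
    · have hB := Finset.disjoint_left.1 hd hi
      rw [hh.add i hi, hf.indep i hB, hf.indep i hB, hf.indep i hB, add_smul]
    · have hA := Finset.disjoint_right.1 hd hi
      rw [hf.add i hi, hh.indep i hA, hh.indep i hA, hh.indep i hA, smul_add]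
  smul i hi x c a := by
    rw [Finset.mem_union] at hi
    rcases hi with hi | hi
    · have hB := Finset.disjoint_left.1 hd hi
      rw [hh.smul i hi, hf.indep i hB, hf.indep i hB, smul_assoc]
    · have hA := Finset.disjoint_right.1 hd hi
      rw [hf.smul i hi, hh.indep i hA, hh.indep i hA, smul_comm]
  indep i hi x a := by
    rw [Finset.mem_union, not_or] at hi
    rw [hh.indep i hi.1, hf.indep i hi.2]

theorem ML.prod {κ : Type} [DecidableEq κ] (s : Finset κ) {T : κ → Finset ι}
    {f : κ → (∀ i, G i) → F}
    (hf : ∀ k ∈ s, ML F (T k) (f k)) (hd : ∀ k ∈ s, ∀ l ∈ s, k ≠ l → Disjoint (T k) (T l)) :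
    ML F (s.biUnion T) (fun x => ∏ k ∈ s, f k x) := by
  induction s using Finset.induction_on with
  | empty => exact ⟨by simp, by simp, by simp⟩
  | insert k s hk ih =>
    simp_rw [Finset.prod_insert hk, Finset.biUnion_insert]
    refine (hf k (by simp)).smul' (ih (fun k hk => hf k (by simp [hk]))
      (fun a ha b hb => hd a (by simp [ha]) b (by simp [hb]))) ?_
    rw [Finset.disjoint_biUnion_right]
    intro l hl
    exact hd k (by simp) l (by simp [hl]) (by rintro rfl; exact hk hl)

theorem ML.zero_of_zero {I : Finset ι} {f : (∀ i, G i) → W} (hf : ML F I f) {i : ι} (hi : i ∈ I)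
    (x : ∀ i, G i) : f (update x i 0) = 0 := by
  have := (hf.lin hi x).map_zero
  simpa using this

end ML

section comb
variable {F : Type} [Field F] {α κ : Type} [Fintype α] [DecidableEq α] [Fintype κ] [DecidableEq κ]

/-- Polarised determinant. -/
def EE {F : Type} [Field F] {α κ : Type} [Fintype α] [DecidableEq α] [Fintype κ] [DecidableEq κ]
    (φ : α → α → (κ → α) → F) : F :=
  ∑ τ : Equiv.Perm α, ∑ π : κ → Equiv.Perm α,
    ((Equiv.Perm.sign τ : ℤ) : F) * ∏ j, φ j (τ j) (fun i => π i j)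

/-- Generalised minors of the polarised determinant. -/
def RR {F : Type} [Field F] {α κ : Type} [Fintype α] [DecidableEq α] [Fintype κ] [DecidableEq κ]
    (φ : α → Option α → (κ → Option α) → F) (l : Option α) (b : κ → Option α) : F :=
  (if l = none then 1 else -1) * ∑ e : Equiv.Perm α, ∑ ε : κ → Equiv.Perm α,
    ((Equiv.Perm.sign e : ℤ) : F) *
      ∏ j : α, φ j (Equiv.swap none l (some (e j)))
        (fun i => Equiv.swap none (b i) (some (ε i j)))

theorem EE_option (φ : Option α → Option α → (κ → Option α) → F) :
    EE φ = ∑ l, ∑ b : κ → Option α, φ none l b * RR (fun j => φ (some j)) l b := by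
  unfold EE
  rw [← Equiv.sum_comp (Equiv.Perm.decomposeOption (α := α)).symm, Fintype.sum_prod_type]
  refine Finset.sum_congr rfl fun l _ => ?_
  let E : (κ → Equiv.Perm (Option α)) ≃ (κ → Option α) × (κ → Equiv.Perm α) :=
    (Equiv.piCongrRight fun _ => Equiv.Perm.decomposeOption).trans
      (Equiv.arrowProdEquivProdArrow κ (fun _ => Option α) (fun _ => Equiv.Perm α))
  have hE : ∀ b ε i, E.symm (b, ε) i = Equiv.swap none (b i) * Equiv.optionCongr (ε i) := by
    intro b ε i; rfl
  have h1 : ∀ e : Equiv.Perm α, (∑ π : κ → Equiv.Perm (Option α),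
      ((Equiv.Perm.sign (Equiv.Perm.decomposeOption.symm (l, e)) : ℤ) : F) *
      ∏ j, φ j ((Equiv.Perm.decomposeOption.symm (l, e)) j) (fun i => π i j)) =
      ∑ b : κ → Option α, ∑ ε : κ → Equiv.Perm α, φ none l b *
        ((if l = none then 1 else -1) * (((Equiv.Perm.sign e : ℤ) : F) *
      ∏ j : α, φ (some j) (Equiv.swap none l (some (e j)))
        (fun i => Equiv.swap none (b i) (some (ε i j))))) := by
    intro e
    rw [← Equiv.sum_comp E.symm, Fintype.sum_prod_type]
    refine Finset.sum_congr rfl fun b _ => Finset.sum_congr rfl fun ε _ => ?_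
    rw [Fintype.prod_option]
    simp only [hE, Equiv.Perm.decomposeOption_symm_apply, Equiv.Perm.mul_apply,
      Equiv.optionCongr_apply, Option.map_none, Option.map_some, Equiv.swap_apply_left,
      Equiv.Perm.sign_mul, Equiv.optionCongr_sign]
    by_cases hl : l = none
    · subst hl; simp; ring
    · rw [Equiv.Perm.sign_swap (Ne.symm hl)]
      simp [hl]; ring
  simp_rw [h1]
  rw [Finset.sum_comm]
  refine Finset.sum_congr rfl fun b _ => ?_
  unfold RR
  simp_rw [Finset.mul_sum]

theorem RR_none (φ : α → Option α → (κ → Option α) → F) :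
    RR φ none (fun _ => none) = EE (fun j l b => φ j (some l) (fun i => some (b i))) := by
  simp [RR, EE]

theorem sum_sign_surj (g : α → α) [Decidable (Surjective g)] :
    ∑ S : Finset α, (-1 : F) ^ (Sᶜ.card) * (if ∀ j, g j ∈ S then 1 else 0) =
      if Surjective g then 1 else 0 := by
  split_ifs with h
  · rw [Finset.sum_eq_single univ]
    · simp
    · intro S _ hS
      rw [if_neg, mul_zero]
      intro h2
      apply hS
      ext a
      obtain ⟨j, rfl⟩ := h a
      simp [h2 j]
    · simp
  · unfold Surjective at h
    push Not at h
    obtain ⟨a, ha⟩ := h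
    refine Finset.sum_involution (fun S _ => symmDiff S {a}) ?_ ?_ (by simp) ?_
    · intro S _
      have h1 : (∀ j, g j ∈ symmDiff S {a}) ↔ ∀ j, g j ∈ S := by
        refine forall_congr' fun j => ?_
        simp [Finset.mem_symmDiff, ha j]
      simp only [h1]
      have h2 : (-1 : F) ^ ((symmDiff S {a})ᶜ.card) = - (-1 : F) ^ (Sᶜ.card) := by
        by_cases haS : a ∈ S
        · have : (symmDiff S {a})ᶜ = insert a Sᶜ := by
            ext b; by_cases hb : b = a <;> simp [Finset.mem_symmDiff, hb, haS]
          rw [this, Finset.card_insert_of_notMem (by simpa using haS), pow_succ]; ring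
        · have : Sᶜ = insert a (symmDiff S {a})ᶜ := by
            ext b; by_cases hb : b = a <;> simp [Finset.mem_symmDiff, hb, haS]
          rw [this, Finset.card_insert_of_notMem (by simp [Finset.mem_symmDiff, haS]), pow_succ]
          ring
      rw [h2]; ring
    · intro S _ _ h
      have : a ∈ symmDiff S {a} ↔ a ∈ S := by rw [h]
      simp [Finset.mem_symmDiff] at this
    · intro S _
      rw [symmDiff_assoc, symmDiff_self, symmDiff_bot]

theorem EE_eq_zero (φ : α → α → (κ → α) → F)
    (h : ∀ S : κ → Finset α,
      (Matrix.of fun l j => ∑ b ∈ Fintype.piFinset S, φ j l b).det = 0) : EE φ = 0 := by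
  classical
  have h0 : ∑ S : κ → Finset α, (∏ i, (-1 : F) ^ ((S i)ᶜ.card)) *
      (Matrix.of fun l j => ∑ b ∈ Fintype.piFinset S, φ j l b).det = 0 := by
    simp [h]
  rw [← h0]
  simp_rw [Matrix.det_apply', Matrix.of_apply, Finset.prod_univ_sum, Finset.mul_sum]
  unfold EE
  conv_rhs => rw [Finset.sum_comm]
  refine Finset.sum_congr rfl fun τ _ => ?_
  have h1 : ∀ S : κ → Finset α, ∑ B ∈ Fintype.piFinset (fun _ : α => Fintype.piFinset S),
      (∏ i, (-1 : F) ^ ((S i)ᶜ.card)) * (((Equiv.Perm.sign τ : ℤ) : F) * ∏ j, φ j (τ j) (B j)) =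
      ∑ B : α → κ → α, (∏ i, (-1 : F) ^ ((S i)ᶜ.card) * (if ∀ j, B j i ∈ S i then 1 else 0)) *
        (((Equiv.Perm.sign τ : ℤ) : F) * ∏ j, φ j (τ j) (B j)) := by
    intro S
    rw [← Finset.sum_subset (Finset.subset_univ
      (Fintype.piFinset (fun _ : α => Fintype.piFinset S)))]
    · refine Finset.sum_congr rfl fun B hB => ?_
      simp only [Fintype.mem_piFinset] at hB
      congr 1
      refine Finset.prod_congr rfl fun i _ => ?_
      rw [if_pos (fun j => hB j i), mul_one]
    · intro B _ hB
      simp only [Fintype.mem_piFinset, not_forall] at hB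
      obtain ⟨j, i, hji⟩ := hB
      rw [Finset.prod_eq_zero (Finset.mem_univ i), zero_mul]
      rw [if_neg, mul_zero]
      exact fun hh => hji (hh j)
  simp_rw [h1]
  conv_rhs => rw [Finset.sum_comm]
  simp_rw [← Finset.sum_mul]
  have h2 : ∀ B : α → κ → α, ∑ S : κ → Finset α,
      (∏ i, (-1 : F) ^ ((S i)ᶜ.card) * (if ∀ j, B j i ∈ S i then 1 else 0)) =
      if ∀ i, Surjective (fun j => B j i) then 1 else 0 := by
    intro B
    have := Finset.prod_univ_sum (fun _ : κ => (univ : Finset (Finset α)))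
      (fun i (S : Finset α) => (-1 : F) ^ (Sᶜ.card) * (if ∀ j, B j i ∈ S then 1 else 0))
    rw [Fintype.piFinset_univ] at this
    rw [← this]
    simp_rw [fun i => sum_sign_surj (F := F) (fun j => B j i)]
    by_cases hB : ∀ i, Surjective (fun j => B j i)
    · simp [hB]
    · rw [if_neg hB]
      push Not at hB
      obtain ⟨i, hi⟩ := hB
      exact Finset.prod_eq_zero (Finset.mem_univ i) (by simp [hi])
  simp_rw [h2, ite_mul, one_mul, zero_mul]
  rw [← Finset.sum_filter]
  refine Finset.sum_nbij (fun π j i => π i j) ?_ ?_ ?_ ?_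
  · intro π _
    simpa using fun i => (π i).surjective
  · intro π _ π' _ hh
    funext i
    ext j
    exact congrFun (congrFun hh j) i
  · intro B hB
    simp only [coe_filter, mem_univ, true_and, Set.mem_setOf_eq] at hB
    refine ⟨fun i => Equiv.ofBijective (fun j => B j i)
      ⟨Finite.injective_iff_surjective.2 (hB i), hB i⟩, by simp, ?_⟩
    funext j i
    rfl
  · intro π _
    rfl

end comb

section linalg
variable {F : Type} [Field F] [Fintype F] {U W : Type} [AddCommGroup U] [Module F U] [Fintype U]
  [AddCommGroup W] [Module F W]

theorem card_ker_mul (f : U →ₗ[F] W) :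
    cnt (fun a => f a = 0) * Fintype.card F ^ Module.finrank F (LinearMap.range f) =
      Fintype.card U := by
  classical
  have h1 : cnt (fun a => f a = 0) = Fintype.card (LinearMap.ker f) := by
    rw [cnt_eq_natCard, ← Nat.card_eq_fintype_card]
    rfl
  rw [h1, Module.card_eq_pow_finrank (K := F) (V := LinearMap.ker f),
    Module.card_eq_pow_finrank (K := F) (V := U), ← pow_add, add_comm,
    LinearMap.finrank_range_add_finrank_ker]

theorem rank_add_le' (f g : U →ₗ[F] W) :
    Module.finrank F (LinearMap.range (f + g)) ≤
      Module.finrank F (LinearMap.range f) + Module.finrank F (LinearMap.range g) := by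
  have h1 : LinearMap.range (f + g) ≤ LinearMap.range f ⊔ LinearMap.range g := by
    rintro _ ⟨x, rfl⟩
    exact Submodule.add_mem_sup ⟨x, rfl⟩ ⟨x, rfl⟩
  exact (Submodule.finrank_mono h1).trans (Submodule.finrank_add_le_finrank_add_finrank _ _)

theorem det_eq_zero_of_rank {α : Type} [Fintype α] [DecidableEq α] (f : U →ₗ[F] W)
    (h : Module.finrank F (LinearMap.range f) < Fintype.card α) (u : α → U)
    (w : α → (W →ₗ[F] F)) : (Matrix.of fun l j => w j (f (u l))).det = 0 := by
  have hd : ¬ LinearIndependent F (fun l => (⟨f (u l), ⟨u l, rfl⟩⟩ : LinearMap.range f)) := by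
    intro hli
    have := hli.fintype_card_le_finrank
    omega
  rw [Fintype.not_linearIndependent_iff] at hd
  obtain ⟨c, hc, i, hi⟩ := hd
  rw [← Matrix.exists_vecMul_eq_zero_iff]
  refine ⟨c, fun h0 => hi (by rw [h0]; rfl), ?_⟩
  have hc' : ∑ l, c l • f (u l) = 0 := by
    have := congrArg Subtype.val hc
    simpa using this
  funext j
  simp only [Matrix.vecMul, dotProduct, Matrix.of_apply, Pi.zero_apply]
  rw [← map_zero (w j), ← hc', map_sum]
  simp

end linalg

section linalg2
variable {F : Type} [Field F] [Fintype F] {U : Type} [AddCommGroup U] [Module F U] [Fintype U]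

theorem ker_count {σ : Type} [Fintype σ] (l : σ → (U →ₗ[F] F)) :
    Fintype.card U ≤ cnt (fun a => ∀ j, l j a = 0) * Fintype.card F ^ Fintype.card σ := by
  have h := card_ker_mul (LinearMap.pi l)
  have h1 : cnt (fun a => LinearMap.pi l a = 0) = cnt (fun a => ∀ j, l j a = 0) :=
    cnt_congr fun a => by simp [funext_iff]
  rw [h1] at h
  rw [← h]
  refine Nat.mul_le_mul_left _ (Nat.pow_le_pow_right Fintype.card_pos ?_)
  exact (Submodule.finrank_le _).trans (by simp)

end linalg2

section ext
variable {F : Type} [Field F] {ι : Type} [DecidableEq ι] {G : ι → Type}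
  [∀ i, AddCommGroup (G i)] [∀ i, Module F (G i)]
  {W : Type} [AddCommGroup W] [Module F W]

/-- extension by zero -/
def ext0 (J : Finset ι) (y : ∀ i : J, G i.1) : ∀ i, G i :=
  fun i => if h : i ∈ J then y ⟨i, h⟩ else 0

theorem ext0_of_mem {J : Finset ι} (y : ∀ i : J, G i.1) {i : ι} (h : i ∈ J) :
    ext0 J y i = y ⟨i, h⟩ := by simp [ext0, h]

theorem ext0_update {J : Finset ι} (y : ∀ i : J, G i.1) (i : J) (a : G i.1) [DecidableEq J] :
    ext0 J (update y i a) = update (ext0 J y) i.1 a := by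
  funext j
  by_cases hj : j = i.1
  · subst hj
    simp [ext0]
  · rw [update_of_ne hj]
    unfold ext0
    split_ifs with h
    · rw [update_of_ne]
      intro hh
      exact hj (congrArg Subtype.val hh)
    · rfl

/-- the genuine multilinear map on the coordinates in `J` -/
def ML.mm {I J : Finset ι} {f : (∀ i, G i) → W} (hf : ML F I f) (hJ : J ⊆ I) {i₀ : ι}
    (hi : i₀ ∉ J) (u : G i₀) : MultilinearMap F (fun i : J => G i.1) W where
  toFun y := f (update (ext0 J y) i₀ u)
  map_update_add' y i a b := by
    have hne : i.1 ≠ i₀ := fun h => hi (h ▸ i.2)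
    rw [ext0_update, ext0_update, ext0_update, update_comm hne, update_comm hne, update_comm hne,
      hf.add _ (hJ i.2)]
  map_update_smul' y i a b := by
    have hne : i.1 ≠ i₀ := fun h => hi (h ▸ i.2)
    rw [ext0_update, ext0_update, update_comm hne, update_comm hne, hf.smul _ (hJ i.2)]

theorem ML.expand {I J : Finset ι} {f : (∀ i, G i) → W} (hf : ML F I f) (hJ : J ⊆ I) {i₀ : ι}
    (hi : i₀ ∉ J) (u : G i₀) {α : Type} [DecidableEq α] (S : J → Finset α)
    (Y : α → ∀ i, G i) :
    f (update (ext0 J (fun i => ∑ a ∈ S i, Y a i.1)) i₀ u) =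
      ∑ b ∈ Fintype.piFinset S, f (update (ext0 J (fun i => Y (b i) i.1)) i₀ u) :=
  (hf.mm hJ hi u).map_sum_finset (fun i a => Y a i.1) S

theorem ML.vanish_span {A : Finset ι} {h : (∀ i, G i) → W} (hh : ML F A h)
    (N : ∀ i, Set (G i)) (h0 : ∀ z : ∀ i, G i, (∀ i ∈ A, z i ∈ N i) → h z = 0) :
    ∀ z : ∀ i, G i, (∀ i ∈ A, z i ∈ Submodule.span F (N i)) → h z = 0 := by
  have key : ∀ K : Finset ι, K ⊆ A → ∀ z : ∀ i, G i, (∀ i ∈ K, z i ∈ Submodule.span F (N i)) →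
      (∀ i ∈ A, i ∉ K → z i ∈ N i) → h z = 0 := by
    intro K
    induction K using Finset.induction_on with
    | empty => intro _ z _ hz; exact h0 z fun i hi => hz i hi (by simp)
    | insert i K hi ih =>
      intro hK z hz hz'
      have hiA : i ∈ A := hK (by simp)
      have hle : Submodule.span F (N i) ≤ LinearMap.ker (hh.lin hiA z) := by
        rw [Submodule.span_le]
        intro a ha
        simp only [SetLike.mem_coe, LinearMap.mem_ker, ML.lin_apply]
        apply ih (fun j hj => hK (by simp [hj]))
        · intro j hj
          rw [update_of_ne (by rintro rfl; exact hi hj)]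
          exact hz j (by simp [hj])
        · intro j hjA hjK
          by_cases hji : j = i
          · subst hji; simpa using ha
          · rw [update_of_ne hji]
            exact hz' j hjA (by simp [hji, hjK])
      have := hle (hz i (by simp))
      simpa using this
  intro z hz
  exact key A subset_rfl z hz (fun i hi hi' => absurd hi hi')

theorem box_vanish [Fintype ι] {A J : Finset ι} {h : (∀ i, G i) → W} (hh : ML F A h)
    (hAJ : A ⊆ J) (hA : A.Nonempty)
    {α : Type} (Y : α → ∀ i, G i) (hb : ∀ b : J → α, h (ext0 J (fun i => Y (b i) i.1)) = 0)
    (z : ∀ i, G i) (hz : ∀ i ∈ A, ∃ a, z i = Y a i) : h z = 0 := by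
  classical
  obtain ⟨i₁, hi₁⟩ := hA
  obtain ⟨a₀, -⟩ := hz i₁ hi₁
  haveI : Nonempty α := ⟨a₀⟩
  choose! a ha using hz
  rw [← hb (fun i => if i.1 ∈ A then a i.1 else a₀)]
  apply dep_eq A h hh.indep
  intro i hi
  rw [ext0_of_mem _ (hAJ hi)]
  simp [hi, ha i hi]

end ext

section dens
variable {F : Type} [Field F] [Fintype F] {ι : Type} [Fintype ι] [DecidableEq ι] {G : ι → Type}
  [∀ i, AddCommGroup (G i)] [∀ i, Module F (G i)] [∀ i, Fintype (G i)]
  {W : Type} [AddCommGroup W] [Module F W]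

theorem EE_vanish {I J : Finset ι} {i₀ : ι} (hi : i₀ ∉ J) (hI : I = insert i₀ J)
    {f : (∀ i, G i) → W} (hf : ML F I f) (hi₀ : i₀ ∈ I) {σ : Type} (h : σ → (∀ i, G i) → F)
    (A : σ → Finset ι) (hh : ∀ j, ML F (A j) (h j)) (hA : ∀ j, (A j).Nonempty)
    (hAJ : ∀ j, A j ⊆ J) {α : Type} [Fintype α] [DecidableEq α]
    (hr : ∀ x, (∀ j, h j x = 0) →
      Module.finrank F (LinearMap.range (hf.lin hi₀ x)) < Fintype.card α)
    (Y : α → ∀ i, G i) (w : α → (W →ₗ[F] F))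
    (hb : ∀ j, ∀ b : J → α, h j (ext0 J (fun i => Y (b i) i.1)) = 0) :
    EE (fun j l (b : J → α) => w j (f (update (ext0 J (fun i => Y (b i) i.1)) i₀ (Y l i₀)))) = 0 := by
  apply EE_eq_zero
  intro S
  have hz : ∀ j, h j (ext0 J (fun i => ∑ a ∈ S i, Y a i.1)) = 0 := by
    intro j
    apply (hh j).vanish_span (fun i => Set.range (fun a => Y a i))
    · intro z hz
      apply box_vanish (hh j) (hAJ j) (hA j) Y (hb j)
      intro i hi
      obtain ⟨a, ha⟩ := hz i hi
      exact ⟨a, ha.symm⟩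
    · intro i hi
      rw [ext0_of_mem _ (hAJ j hi)]
      exact Submodule.sum_mem _ fun a _ => Submodule.subset_span ⟨a, rfl⟩
  have := det_eq_zero_of_rank (hf.lin hi₀ _) (hr _ hz) (fun l => Y l i₀) w
  rw [← this]
  congr 2
  funext l j
  rw [ML.lin_apply, hf.expand (by simp [hI]) hi, map_sum]

theorem density {σ : Type} [Fintype σ] (g : σ → (∀ i, G i) → F) (T : σ → Finset ι)
    (hg : ∀ j, ML F (T j) (g j)) (hT : ∀ j, (T j).Nonempty ∨ ∀ x, g j x = 0) :
    Fintype.card (∀ i, G i) ≤ cnt (fun x => ∀ j, g j x = 0) *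
      Fintype.card F ^ Fintype.card σ := by
  classical
  have key : ∀ K : Finset ι, Fintype.card (∀ i, G i) ≤
      cnt (fun x => ∀ j, T j ⊆ K → g j x = 0) *
        Fintype.card F ^ (univ.filter (fun j => T j ⊆ K)).card := by
    intro K
    induction K using Finset.induction_on with
    | empty =>
      have : cnt (fun x => ∀ j, T j ⊆ ∅ → g j x = 0) = Fintype.card (∀ i, G i) := by
        apply cnt_true
        intro x j hj
        rcases hT j with h | h
        · rw [Finset.subset_empty] at hj
          simp [hj] at h
        · exact h x
      rw [this]
      exact Nat.le_mul_of_pos_right _ (Nat.pow_pos Fintype.card_pos)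
    | insert i K hi ih =>
      set N := univ.filter (fun j => T j ⊆ insert i K ∧ ¬ T j ⊆ K) with hN
      have hcard : (univ.filter (fun j => T j ⊆ insert i K)).card =
          (univ.filter (fun j => T j ⊆ K)).card + N.card := by
        rw [← Finset.card_union_of_disjoint]
        · congr 1
          ext j
          simp only [hN, Finset.mem_filter, Finset.mem_union, Finset.mem_univ, true_and]
          constructor
          · intro h; by_cases h' : T j ⊆ K <;> simp [h, h']
          · rintro (h | h)
            · exact h.trans (Finset.subset_insert _ _)
            · exact h.1
        · rw [Finset.disjoint_left]
          intro j; simp only [hN, Finset.mem_filter]; tauto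
      have hiT : ∀ j : N, i ∈ T j.1 := by
        intro j
        have := (Finset.mem_filter.1 j.2).2
        by_contra hh
        exact this.2 ((Finset.subset_insert_iff_of_notMem hh).1 this.1)
      have hfib : ∀ x, (∀ j, T j ⊆ K → g j x = 0) → Fintype.card (G i) ≤
          cnt (fun a : G i => ∀ j, T j ⊆ insert i K → g j (update x i a) = 0) *
            Fintype.card F ^ N.card := by
        intro x hx
        have := ker_count (fun j : N => (hg j.1).lin (hiT j) x)
        rw [Fintype.card_coe] at this
        refine this.trans (Nat.mul_le_mul_right _ (cnt_mono ?_))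
        intro a ha j hj
        by_cases hjK : T j ⊆ K
        · rw [(hg j).indep i (fun h => hi (hjK h)), hx j hjK]
        · exact ha ⟨j, by simp [hN, hj, hjK]⟩
      have hsum := sum_cnt_update i (fun x => ∀ j, T j ⊆ insert i K → g j x = 0)
      have h2 : cnt (fun x => ∀ j, T j ⊆ K → g j x = 0) * Fintype.card (G i) ≤
          (Fintype.card (G i) * cnt (fun x => ∀ j, T j ⊆ insert i K → g j x = 0)) *
            Fintype.card F ^ N.card := by
        rw [← hsum, Finset.sum_mul, cnt_eq_sum, Finset.sum_mul]
        refine Finset.sum_le_sum fun x _ => ?_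
        split_ifs with hx
        · rw [one_mul]; exact hfib x hx
        · simp
      have hpos : 0 < Fintype.card (G i) := Fintype.card_pos
      have h3 : cnt (fun x => ∀ j, T j ⊆ K → g j x = 0) ≤
          cnt (fun x => ∀ j, T j ⊆ insert i K → g j x = 0) * Fintype.card F ^ N.card := by
        refine Nat.le_of_mul_le_mul_left ?_ hpos
        calc _ = _ := mul_comm _ _
          _ ≤ _ := h2
          _ = _ := by ring
      rw [hcard, pow_add]
      calc _ ≤ _ := ih
        _ ≤ _ := Nat.mul_le_mul_right _ h3
        _ = _ := by ring
  refine (key univ).trans ?_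
  have h1 : (univ.filter (fun j => T j ⊆ univ)).card = Fintype.card σ := by
    simp
  rw [h1]
  exact Nat.mul_le_mul_right _ (cnt_mono fun x hx j => hx j (Finset.subset_univ _))

theorem most_all {I J : Finset ι} {i₀ : ι} (hi : i₀ ∉ J) (hI : I = insert i₀ J)
    {f : (∀ i, G i) → W} (hf : ML F I f) (hi₀ : i₀ ∈ I) {σ : Type} [Fintype σ]
    (h : σ → (∀ i, G i) → F)
    (A : σ → Finset ι) (hh : ∀ j, ML F (A j) (h j)) (c : ℕ) (K : Finset ι) (hK : K ⊆ J) :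
    ∀ x, (∀ j, h j x = 0) →
      2 ^ K.card * c < Module.finrank F (LinearMap.range (hf.lin hi₀ x)) →
      Fintype.card (∀ i, G i) ≤ cnt (fun z : ∀ i, G i => (∀ j, h j (K.piecewise z x) = 0) ∧
        c < Module.finrank F (LinearMap.range (hf.lin hi₀ (K.piecewise z x)))) *
        (2 * Fintype.card F ^ Fintype.card σ) ^ K.card := by
  classical
  induction K using Finset.induction_on with
  | empty =>
    intro x hx hr
    simp only [Finset.piecewise_empty, Finset.card_empty, pow_zero, mul_one, one_mul] at hr ⊢
    rw [cnt_true]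
    intro _
    exact ⟨hx, hr⟩
  | insert i K hiK ih =>
    intro x hx hr
    have hiJ : i ∈ J := hK (by simp)
    have hii : i ≠ i₀ := by rintro rfl; exact hi hiJ
    have hiI : i ∈ I := by simp [hI, hiJ]
    specialize ih (fun j hj => hK (by simp [hj]))
    rw [Finset.card_insert_of_notMem hiK] at hr ⊢
    set q := Fintype.card F
    set s := Fintype.card σ
    set B : G i → Prop := fun a => (∀ j, h j (update x i a) = 0) ∧
      2 ^ K.card * c < Module.finrank F (LinearMap.range (hf.lin hi₀ (update x i a))) with hB
    have hH : Fintype.card (G i) ≤ cnt (fun a : G i => ∀ j, h j (update x i a) = 0) * q ^ s := by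
      have := ker_count (fun j => if hj : i ∈ A j then (hh j).lin hj x else (0 : G i →ₗ[F] F))
      refine this.trans (Nat.mul_le_mul_right _ (cnt_mono ?_))
      intro a ha j
      have := ha j
      split_ifs at this with hj
      · exact this
      · rw [(hh j).indep i hj, hx j]
    have hsub : ∀ a : G i, (∀ j, h j (update x i a) = 0) → ∀ j, h j (update x i (x i - a)) = 0 := by
      intro a ha j
      by_cases hj : i ∈ A j
      · have h1 := ((hh j).lin hj x).map_sub (x i) a
        simp only [ML.lin_apply, update_eq_self] at h1
        rw [h1, ha j, hx j, sub_zero]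
      · rw [(hh j).indep i hj, hx j]
    have hlin : ∀ a : G i, hf.lin hi₀ x = hf.lin hi₀ (update x i a) +
        hf.lin hi₀ (update x i (x i - a)) := by
      intro a
      ext u
      simp only [LinearMap.add_apply, ML.lin_apply]
      rw [update_comm hii, update_comm hii, ← hf.add i hiI, add_sub_cancel,
        ← update_comm hii, update_eq_self]
    have hHB : cnt (fun a : G i => ∀ j, h j (update x i a) = 0) ≤ 2 * cnt B := by
      have h1 : cnt (fun a : G i => ∀ j, h j (update x i a) = 0) ≤
          cnt (fun a => B a ∨ B (x i - a)) := by
        apply cnt_mono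
        intro a ha
        by_contra hcon
        rw [not_or] at hcon
        have h1 : ¬ 2 ^ K.card * c < _ := fun hlt => hcon.1 ⟨ha, hlt⟩
        have h2 : ¬ 2 ^ K.card * c < _ := fun hlt => hcon.2 ⟨hsub a ha, hlt⟩
        have h3 := rank_add_le' (hf.lin hi₀ (update x i a)) (hf.lin hi₀ (update x i (x i - a)))
        rw [← hlin a] at h3
        rw [pow_succ] at hr
        rw [not_lt] at h1 h2
        linarith
      have h2 : cnt (fun a => B (x i - a)) ≤ cnt B :=
        cnt_inj (fun a => x i - a) sub_right_injective (fun a ha => ha)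
      have h3 := cnt_or B (fun a => B (x i - a))
      omega
    set Q : (∀ i, G i) → Prop := fun y => (∀ j, h j y = 0) ∧
        c < Module.finrank F (LinearMap.range (hf.lin hi₀ y)) with hQ
    have hsum := sum_cnt_update' i (fun z => Q ((insert i K).piecewise z x))
    have hpw : ∀ (z : ∀ i, G i) (a : G i), (insert i K).piecewise (update z i a) x =
        K.piecewise z (update x i a) := by
      intro z a
      funext j
      by_cases hj : j = i
      · subst hj; simp [hiK]
      · by_cases hjK : j ∈ K <;> simp [hj, hjK]
    simp_rw [hpw] at hsum
    have h4 : cnt B * Fintype.card (∀ i, G i) ≤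
        (Fintype.card (G i) * cnt (fun z => Q ((insert i K).piecewise z x))) *
          (2 * q ^ s) ^ K.card := by
      rw [← hsum, Finset.sum_mul, cnt_eq_sum, Finset.sum_mul]
      refine Finset.sum_le_sum fun a _ => ?_
      split_ifs with ha
      · rw [one_mul]; exact ih (update x i a) ha.1 ha.2
      · simp
    have hpos : 0 < Fintype.card (G i) := Fintype.card_pos
    refine Nat.le_of_mul_le_mul_left ?_ hpos
    calc Fintype.card (G i) * Fintype.card (∀ i, G i)
        ≤ (2 * cnt B) * q ^ s * Fintype.card (∀ i, G i) :=
          Nat.mul_le_mul_right _ (hH.trans (Nat.mul_le_mul_right _ hHB))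
      _ = (2 * q ^ s) * (cnt B * Fintype.card (∀ i, G i)) := by ring
      _ ≤ (2 * q ^ s) * ((Fintype.card (G i) * cnt (fun z => Q ((insert i K).piecewise z x))) *
          (2 * q ^ s) ^ K.card) := Nat.mul_le_mul_left _ h4
      _ = _ := by rw [pow_succ]; ring

end dens

section prdef
variable {ι : Type} [DecidableEq ι] {G : ι → Type} {W : Type}

/-- Bounded partition rank decomposition. -/
def PR (F : Type) [Field F] {ι : Type} [DecidableEq ι] {G : ι → Type}
    [∀ i, AddCommGroup (G i)] [∀ i, Module F (G i)]
    {W : Type} [AddCommGroup W] [Module F W] (I : Finset ι) (f : (∀ i, G i) → W) (N : ℕ) : Prop :=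
  ∃ (σ : Type) (_ : Fintype σ) (h : σ → (∀ i, G i) → F) (C : σ → (∀ i, G i) → W)
    (A B : σ → Finset ι), Fintype.card σ ≤ N ∧
    (∀ j, (A j).Nonempty ∧ Disjoint (A j) (B j) ∧ A j ∪ B j = I ∧ ML F (A j) (h j) ∧
      ML F (B j) (C j)) ∧ ∀ x, f x = ∑ j, h j x • C j x

end prdef

section stages
variable {F : Type} [Field F] [Fintype F] {ι : Type} [Fintype ι] [DecidableEq ι] {G : ι → Type}
  [∀ i, AddCommGroup (G i)] [∀ i, Module F (G i)] [∀ i, Fintype (G i)]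
  {W : Type} [AddCommGroup W] [Module F W]

theorem ML.lin_indep {I : Finset ι} {f : (∀ i, G i) → W} (h : ML F I f) {i : ι} (hi : i ∈ I)
    (x : ∀ i, G i) (a : G i) : h.lin hi (update x i a) = h.lin hi x := by
  ext u; simp

theorem ML.rk_indep {I : Finset ι} {f : (∀ i, G i) → W} (h : ML F I f) {i : ι} (hi : i ∈ I)
    (x : ∀ i, G i) (a : G i) : Module.finrank F (LinearMap.range (h.lin hi (update x i a))) =
      Module.finrank F (LinearMap.range (h.lin hi x)) := by
  rw [h.lin_indep]

theorem ML.lin_indep' {I : Finset ι} {f : (∀ i, G i) → W} (h : ML F I f) {i j : ι} (hi : i ∈ I)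
    (hj : j ∉ I) (x : ∀ i, G i) (a : G j) : h.lin hi (update x j a) = h.lin hi x := by
  ext u
  have : j ≠ i := by rintro rfl; exact hj hi
  simp only [ML.lin_apply]
  rw [update_comm this, h.indep j hj]

theorem ML.slice {I J : Finset ι} {i₀ : ι} (hi : i₀ ∉ J) (hI : I = insert i₀ J)
    {f : (∀ i, G i) → W} (hf : ML F I f) (u : G i₀) : ML F J (fun x => f (update x i₀ u)) where
  add i hiJ x a b := by
    have hne : i ≠ i₀ := by rintro rfl; exact hi hiJ
    rw [update_comm hne, update_comm hne, update_comm hne, hf.add i (by simp [hI, hiJ])]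
  smul i hiJ x c a := by
    have hne : i ≠ i₀ := by rintro rfl; exact hi hiJ
    rw [update_comm hne, update_comm hne, hf.smul i (by simp [hI, hiJ])]
  indep i hiJ x a := by
    by_cases hne : i = i₀
    · subst hne; simp
    · rw [update_comm hne, hf.indep i (by simp [hI, hiJ, hne])]

theorem two_le_card : 2 ≤ Fintype.card F := Fintype.one_lt_card

theorem choose_slice {I : Finset ι} {i₀ : ι}
    {f : (∀ i, G i) → W} (hf : ML F I f) (hi₀ : i₀ ∈ I) (t c : ℕ)
    (hd : Fintype.card (∀ i, G i) ≤ cnt (fun x => f x = 0) * Fintype.card F ^ t) :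
    ∃ u : G i₀, Fintype.card (∀ i, G i) + Fintype.card F ^ (c + 1) *
      cnt (fun x => c < Module.finrank F (LinearMap.range (hf.lin hi₀ x)) ∧
        f (update x i₀ u) = 0) ≤
      Fintype.card F ^ (t + 1) * cnt (fun x => f (update x i₀ u) = 0) := by
  classical
  set q := Fintype.card F with hq
  have hq2 : 2 ≤ q := two_le_card
  have ha := sum_cnt_update' i₀ (fun x => f x = 0)
  set Pr : (∀ i, G i) → Prop := fun x => c < Module.finrank F (LinearMap.range (hf.lin hi₀ x)) ∧
        f x = 0 with hPr
  have hb := sum_cnt_update' i₀ Pr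
  have hb2 := sum_cnt_update i₀ Pr
  simp only [hPr, ML.rk_indep] at hb hb2
  have hpos : 0 < Fintype.card (G i₀) := Fintype.card_pos
  have h1 : cnt Pr * q ^ (c + 1) ≤ Fintype.card (∀ i, G i) := by
    refine Nat.le_of_mul_le_mul_left ?_ hpos
    rw [← mul_assoc, ← hb2, Finset.sum_mul, ← Finset.card_univ (α := ∀ i, G i), mul_comm,
      ← smul_eq_mul, ← Finset.sum_const]
    refine Finset.sum_le_sum fun x _ => ?_
    by_cases hx : c < Module.finrank F (LinearMap.range (hf.lin hi₀ x))
    · have := card_ker_mul (hf.lin hi₀ x)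
      rw [← this]
      refine Nat.mul_le_mul (cnt_mono fun a ha => ha.2) (Nat.pow_le_pow_right (by omega) hx)
    · have : cnt (fun a => c < Module.finrank F (LinearMap.range (hf.lin hi₀ x)) ∧
        f (update x i₀ a) = 0) = 0 := by
        simp [cnt, hx]
      rw [this]; simp
  have := Finset.exists_le_of_sum_le (s := (univ : Finset (G i₀)))
    (f := fun u => Fintype.card (∀ i, G i) + q ^ (c + 1) *
      cnt (fun x => c < Module.finrank F (LinearMap.range (hf.lin hi₀ x)) ∧
        f (update x i₀ u) = 0))
    (g := fun u => q ^ (t + 1) * cnt (fun x => f (update x i₀ u) = 0)) univ_nonempty ?_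
  · obtain ⟨u, -, hu⟩ := this
    exact ⟨u, hu⟩
  · rw [Finset.sum_add_distrib, ← Finset.mul_sum, ← Finset.mul_sum, hb, ha, Finset.sum_const,
      Finset.card_univ, smul_eq_mul]
    change _ + q ^ (c + 1) * (Fintype.card (G i₀) * cnt Pr) ≤ _
    calc _ = Fintype.card (G i₀) * (Fintype.card (∀ i, G i) + cnt Pr * q ^ (c + 1)) := by ring
      _ ≤ Fintype.card (G i₀) * (q * (cnt (fun x => f x = 0) * q ^ t)) := by
        refine Nat.mul_le_mul_left _ ?_
        nlinarith
      _ = _ := by rw [pow_succ]; ring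

theorem stage1 {I J : Finset ι} {i₀ : ι} (hi : i₀ ∉ J) (hI : I = insert i₀ J)
    {f : (∀ i, G i) → W} (hf : ML F I f) (hi₀ : i₀ ∈ I) (t N : ℕ)
    (hd : Fintype.card (∀ i, G i) ≤ cnt (fun x => f x = 0) * Fintype.card F ^ t)
    (hIH : ∀ g : (∀ i, G i) → W, ML F J g →
      Fintype.card (∀ i, G i) ≤ cnt (fun x => g x = 0) * Fintype.card F ^ (t + 1) → PR F J g N) :
    ∃ (σ : Type) (_ : Fintype σ) (h : σ → (∀ i, G i) → F) (A : σ → Finset ι),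
      Fintype.card σ ≤ N ∧ (∀ j, (A j).Nonempty) ∧ (∀ j, A j ⊆ J) ∧ (∀ j, ML F (A j) (h j)) ∧
      ∀ x, (∀ j, h j x = 0) → Module.finrank F (LinearMap.range (hf.lin hi₀ x)) ≤
        2 ^ J.card * (t + (N + 1) * J.card) := by
  classical
  set c := t + (N + 1) * J.card with hc
  obtain ⟨u, hu⟩ := choose_slice hf hi₀ t c hd
  set q := Fintype.card F with hq
  have hq2 : 2 ≤ q := two_le_card
  obtain ⟨σ, fσ, h, C, A, B, hcard, hAB, hfe⟩ := hIH _ (hf.slice hi hI u)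
    (by rw [mul_comm]; exact (Nat.le_add_right _ _).trans hu)
  refine ⟨σ, fσ, h, A, hcard, fun j => (hAB j).1, fun j => ?_, fun j => (hAB j).2.2.2.1, ?_⟩
  · rw [← (hAB j).2.2.1]; exact Finset.subset_union_left
  intro x hx
  by_contra hcon
  rw [not_le] at hcon
  have hm := most_all hi hI hf hi₀ h A (fun j => (hAB j).2.2.2.1) c J subset_rfl x hx hcon
  have hAJ : ∀ j, A j ⊆ J := fun j => by
    rw [← (hAB j).2.2.1]; exact Finset.subset_union_left
  have hle : cnt (fun z : ∀ i, G i => (∀ j, h j (J.piecewise z x) = 0) ∧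
        c < Module.finrank F (LinearMap.range (hf.lin hi₀ (J.piecewise z x)))) ≤
      cnt (fun x => c < Module.finrank F (LinearMap.range (hf.lin hi₀ x)) ∧
        f (update x i₀ u) = 0) := by
    apply cnt_mono
    rintro z ⟨h1, h2⟩
    constructor
    · have : hf.lin hi₀ (J.piecewise z x) = hf.lin hi₀ z := by
        refine dep_eq J (fun y => hf.lin hi₀ y) ?_ _ _ ?_
        · intro i hiJ y a
          by_cases hne : i = i₀
          · subst hne; exact hf.lin_indep hi₀ y a
          · exact hf.lin_indep' hi₀ (by simp [hI, hne, hiJ]) y a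
        · intro i hiJ; simp [hiJ]
      rwa [this] at h2
    · refine (hfe z).trans ?_
      refine Finset.sum_eq_zero fun j _ => ?_
      have : h j z = h j (J.piecewise z x) := by
        refine dep_eq (A j) (h j) (hAB j).2.2.2.1.indep _ _ ?_
        intro i hiA; simp [hAJ j hiA]
      rw [this, h1 j, zero_smul]
  set b := cnt (fun x => c < Module.finrank F (LinearMap.range (hf.lin hi₀ x)) ∧
        f (update x i₀ u) = 0)
  have hpow : (2 * q ^ Fintype.card σ) ^ J.card ≤ q ^ ((N + 1) * J.card) := by
    rw [pow_mul]
    refine Nat.pow_le_pow_left ?_ _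
    rw [pow_succ, mul_comm]
    exact Nat.mul_le_mul (Nat.pow_le_pow_right (by omega) hcard) hq2
  have h3 : Fintype.card (∀ i, G i) ≤ b * q ^ ((N + 1) * J.card) :=
    hm.trans (Nat.mul_le_mul hle hpow)
  have h4 : q ^ (t + 1) * Fintype.card (∀ i, G i) ≤ q ^ (c + 1) * b := by
    calc _ ≤ q ^ (t + 1) * (b * q ^ ((N + 1) * J.card)) := Nat.mul_le_mul_left _ h3
      _ = _ := by rw [hc]; ring
  have h5 : q ^ (t + 1) * cnt (fun x => f (update x i₀ u) = 0) ≤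
      q ^ (t + 1) * Fintype.card (∀ i, G i) := Nat.mul_le_mul_left _ (cnt_le_card _)
  have h6 : 0 < Fintype.card (∀ i, G i) := Fintype.card_pos
  omega

theorem stage2 {I J : Finset ι} {i₀ : ι} (hi : i₀ ∉ J) (hI : I = insert i₀ J)
    {f : (∀ i, G i) → W} (hf : ML F I f) (hi₀ : i₀ ∈ I) {σ : Type} (h : σ → (∀ i, G i) → F)
    (A : σ → Finset ι) (hh : ∀ j, ML F (A j) (h j)) (hA : ∀ j, (A j).Nonempty)
    (hAJ : ∀ j, A j ⊆ J) (n : ℕ)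
    (hr : ∀ x, (∀ j, h j x = 0) → Module.finrank F (LinearMap.range (hf.lin hi₀ x)) < n) :
    ∃ (α : Type) (_ : Fintype α) (_ : DecidableEq α) (Y : α → ∀ i, G i) (w : α → (W →ₗ[F] F)),
      Fintype.card α < n ∧
      (∀ j, ∀ b : J → α, h j (ext0 J (fun i => Y (b i) i.1)) = 0) ∧
      EE (fun j l (b : J → α) =>
        w j (f (update (ext0 J (fun i => Y (b i) i.1)) i₀ (Y l i₀)))) ≠ 0 ∧
      ∀ (Y : Option α → ∀ i, G i) (w : Option α → (W →ₗ[F] F)),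
        (∀ j, ∀ b : J → Option α, h j (ext0 J (fun i => Y (b i) i.1)) = 0) →
        EE (fun j l (b : J → Option α) =>
          w j (f (update (ext0 J (fun i => Y (b i) i.1)) i₀ (Y l i₀)))) = 0 := by
  classical
  let Q : ℕ → Prop := fun m => ∀ (α : Type) [Fintype α] [DecidableEq α], Fintype.card α = m →
    ∀ (Y : α → ∀ i, G i) (w : α → (W →ₗ[F] F)),
      (∀ j, ∀ b : J → α, h j (ext0 J (fun i => Y (b i) i.1)) = 0) →
      EE (fun j l (b : J → α) =>
        w j (f (update (ext0 J (fun i => Y (b i) i.1)) i₀ (Y l i₀)))) = 0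
  have hQn : Q n := by
    intro α _ _ hα Y w hb
    exact EE_vanish hi hI hf hi₀ h A hh hA hAJ (by rw [hα]; exact hr) Y w hb
  have hex : ∃ m, Q m := ⟨n, hQn⟩
  have hQ0 : ¬ Q 0 := by
    intro h0
    have := h0 (Fin 0) (by simp) (fun a => a.elim0) (fun a => a.elim0) ?_
    · simp [EE] at this
    · intro j b
      obtain ⟨i, hi⟩ := hA j
      exact (b ⟨i, hAJ j hi⟩).elim0
  have hm := Nat.find_spec hex
  have hmn := Nat.find_min' hex hQn
  obtain ⟨m, hm'⟩ : ∃ m, Nat.find hex = m + 1 := by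
    refine Nat.exists_eq_succ_of_ne_zero ?_
    intro h0
    rw [h0] at hm
    exact hQ0 hm
  have hnot := Nat.find_min hex (m := m) (by omega)
  simp only [Q, not_forall] at hnot
  obtain ⟨α, i1, i2, hα, Y, w, hb, hE⟩ := hnot
  refine ⟨α, i1, i2, Y, w, by omega, hb, hE, ?_⟩
  intro Y' w' hb'
  exact hm (Option α) (by rw [Fintype.card_option, hα, hm']) Y' w' hb'

end stages

section ptsec
variable {F : Type} [Field F] {ι : Type} [Fintype ι] [DecidableEq ι] {G : ι → Type}
  [∀ i, AddCommGroup (G i)] [∀ i, Module F (G i)]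
  {W : Type} [AddCommGroup W] [Module F W] {α : Type}

/-- substitute the points `Y` in those coordinates where `o` is not `none`. -/
def ptt (I : Finset ι) (Y : α → ∀ i, G i) (o : ι → Option α) (x : ∀ i, G i) : ∀ i, G i :=
  fun i => if i ∈ I then (o i).elim (x i) (fun a => Y a i) else 0

/-- index choice -/
def idx {J : Finset ι} (i₀ : ι) (l : Option α) (b : J → Option α) : ι → Option α :=
  fun i => if h : i ∈ J then b ⟨i, h⟩ else if i = i₀ then l else none

theorem ptt_update_none (I : Finset ι) (Y : α → ∀ i, G i) (o : ι → Option α) (x : ∀ i, G i)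
    {i : ι} (hi : i ∈ I) (ho : o i = none) (a : G i) :
    ptt I Y o (update x i a) = update (ptt I Y o x) i a := by
  funext j
  by_cases hj : j = i
  · subst hj; simp [ptt, hi, ho]
  · simp [ptt, hj]

theorem ptt_update_some (I : Finset ι) (Y : α → ∀ i, G i) (o : ι → Option α) (x : ∀ i, G i)
    {i : ι} (h : i ∉ I ∨ o i ≠ none) (a : G i) :
    ptt I Y o (update x i a) = ptt I Y o x := by
  funext j
  by_cases hj : j = i
  · subst hj
    rcases h with h | h
    · simp [ptt, h]
    · obtain ⟨b, hb⟩ := Option.ne_none_iff_exists'.1 h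
      simp [ptt, hb]
  · simp [ptt, hj]

theorem ML.comp_ptt [DecidableEq α] {A I : Finset ι} {f : (∀ i, G i) → W} (hf : ML F A f) (hA : A ⊆ I)
    (Y : α → ∀ i, G i) (o : ι → Option α) :
    ML F (A.filter (fun i => o i = none)) (fun x => f (ptt I Y o x)) where
  add i hi x a b := by
    rw [Finset.mem_filter] at hi
    rw [ptt_update_none _ _ _ _ (hA hi.1) hi.2, ptt_update_none _ _ _ _ (hA hi.1) hi.2,
      ptt_update_none _ _ _ _ (hA hi.1) hi.2, hf.add i hi.1]
  smul i hi x c a := by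
    rw [Finset.mem_filter] at hi
    rw [ptt_update_none _ _ _ _ (hA hi.1) hi.2, ptt_update_none _ _ _ _ (hA hi.1) hi.2,
      hf.smul i hi.1]
  indep i hi x a := by
    rw [Finset.mem_filter, not_and_or] at hi
    by_cases hI : i ∉ I ∨ o i ≠ none
    · rw [ptt_update_some _ _ _ _ hI]
    · push Not at hI
      rw [ptt_update_none _ _ _ _ hI.1 hI.2, hf.indep]
      tauto

theorem ptt_eq {I J : Finset ι} {i₀ : ι} (hi : i₀ ∉ J) (hI : I = insert i₀ J)
    (Y : α → ∀ i, G i) (x : ∀ i, G i) (l : Option α) (b : J → Option α) :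
    update (ext0 J (fun i => (b i).elim x Y i.1)) i₀ (l.elim x Y i₀) = ptt I Y (idx i₀ l b) x := by
  funext i
  by_cases h : i = i₀
  · subst h
    simp only [update_self, ptt, hI, idx, hi]
    cases l <;> simp
  · rw [update_of_ne h]
    by_cases hJ : i ∈ J
    · rw [ext0_of_mem _ hJ]
      simp only [ptt, hI, idx, hJ]
      cases hb : b ⟨i, hJ⟩ <;> simp [hJ, hb]
    · simp [ptt, ext0, hI, h, hJ]

theorem ptt_eq' {J : Finset ι} (i₀ : ι)
    (Y : α → ∀ i, G i) (x : ∀ i, G i) (b : J → Option α) :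
    ext0 J (fun i => (b i).elim x Y i.1) = ptt J Y (idx i₀ none b) x := by
  funext i
  by_cases hJ : i ∈ J
  · rw [ext0_of_mem _ hJ]
    simp only [ptt, idx, hJ]
    cases hb : b ⟨i, hJ⟩ <;> simp [hb]
  · simp [ptt, ext0, hJ]

theorem swap_none_eq_none [DecidableEq α] (l : Option α) (a : α) :
    Equiv.swap none l (some a) = none ↔ some a = l := by
  rw [Equiv.swap_apply_def]
  by_cases h : some a = l
  · simp [h]
  · simp [h]

theorem idx_swap [DecidableEq α] {J : Finset ι} {i₀ : ι} (hi : i₀ ∉ J)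
    (l : Option α) (b : J → Option α) (e : α) (ε : J → α) (i : ι) (h : i ∈ insert i₀ J) :
    idx i₀ (Equiv.swap none l (some e)) (fun i => Equiv.swap none (b i) (some (ε i))) i = none ↔
    idx i₀ (some e) (fun i => some (ε i)) i = idx i₀ l b i := by
  rw [Finset.mem_insert] at h
  rcases h with rfl | h
  · simp only [idx, hi]
    simpa using swap_none_eq_none l e
  · simp only [idx, h]
    simpa using swap_none_eq_none _ _

/-- The generalized minors are multilinear. -/
theorem RR_ML [Fintype α] [DecidableEq α] {I J : Finset ι} {i₀ : ι} (hi : i₀ ∉ J)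
    (hI : I = insert i₀ J)
    {f : (∀ i, G i) → W} (hf : ML F I f) (Y : α → ∀ i, G i) (w : α → (W →ₗ[F] F))
    (l : Option α) (b : J → Option α) :
    ML F (I.filter (fun i => idx i₀ l b i ≠ none))
      (fun x => RR (fun j l (b : J → Option α) => w j (f (ptt I Y (idx i₀ l b) x))) l b) := by
  unfold RR
  refine ML.const_smul (W := F) ?_ (if l = none then 1 else -1)
  refine ML.sum _ fun e _ => ML.sum _ fun ε _ => ?_
  refine ML.const_smul (W := F) ?_ _
  set T : α → Finset ι := fun j => I.filter (fun i =>
    idx i₀ (Equiv.swap none l (some (e j)))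
      (fun i => Equiv.swap none (b i) (some (ε i j))) i = none) with hT
  have key : ∀ j i, i ∈ I → (i ∈ T j ↔
      idx i₀ (some (e j)) (fun i => some (ε i j)) i = idx i₀ l b i) := by
    intro j i hiI
    rw [← idx_swap hi l b (e j) (fun i => ε i j) i (hI ▸ hiI)]
    simp [hT, hiI]
  have hU : I.filter (fun i => idx i₀ l b i ≠ none) = univ.biUnion T := by
    ext i
    rw [Finset.mem_filter, Finset.mem_biUnion]
    constructor
    · rintro ⟨hiI, hne⟩
      have h' := hiI
      rw [hI, Finset.mem_insert] at h'
      by_cases hJ : i ∈ J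
      · obtain ⟨a, ha⟩ := Option.ne_none_iff_exists'.1 hne
        refine ⟨(ε ⟨i, hJ⟩).symm a, Finset.mem_univ _, (key _ _ hiI).2 ?_⟩
        rw [ha]; simp [idx, hJ]
      · obtain ⟨a, ha⟩ := Option.ne_none_iff_exists'.1 hne
        refine ⟨e.symm a, Finset.mem_univ _, (key _ _ hiI).2 ?_⟩
        rw [ha]
        have : i = i₀ := by tauto
        simp [idx, hi, this]
    · rintro ⟨j, -, hj⟩
      have hiI : i ∈ I := (Finset.mem_filter.1 hj).1
      refine ⟨hiI, ?_⟩
      rw [← (key j i hiI).1 hj]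
      have h' := hiI
      rw [hI, Finset.mem_insert] at h'
      by_cases hJ : i ∈ J
      · simp [idx, hJ]
      · have : i = i₀ := by tauto
        simp [idx, hi, this]
  rw [hU]
  refine ML.prod univ (fun j _ => ?_) ?_
  · exact (hf.comp_ptt subset_rfl Y _).comp_lin (w j)
  · intro j _ j' _ hne
    rw [Finset.disjoint_left]
    intro i h1 h2
    have hiI : i ∈ I := (Finset.mem_filter.1 h1).1
    have := ((key j i hiI).1 h1).trans ((key j' i hiI).1 h2).symm
    by_cases hJ : i ∈ J
    · simp only [idx, hJ, dite_true, Option.some.injEq] at this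
      exact hne ((ε ⟨i, hJ⟩).injective this)
    · have h' := hiI
      rw [hI, Finset.mem_insert] at h'
      have h0 : i = i₀ := by tauto
      simp only [idx, hJ, dite_false, h0, if_true, Option.some.injEq] at this
      simp [hi] at this
      exact hne this

end ptsec

section stage3
variable {F : Type} [Field F] [Fintype F] {ι : Type} [Fintype ι] [DecidableEq ι] {G : ι → Type}
  [∀ i, AddCommGroup (G i)] [∀ i, Module F (G i)] [∀ i, Fintype (G i)]
  {W : Type} [AddCommGroup W] [Module F W]

theorem stage3 {I J : Finset ι} {i₀ : ι} (hi : i₀ ∉ J) (hI : I = insert i₀ J)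
    {f : (∀ i, G i) → W} (hf : ML F I f) {σ : Type} [Fintype σ]
    (h : σ → (∀ i, G i) → F)
    (A : σ → Finset ι) (hh : ∀ j, ML F (A j) (h j)) (hA : ∀ j, (A j).Nonempty)
    (hAJ : ∀ j, A j ⊆ J) {α : Type} [Fintype α] [DecidableEq α] (Y : α → ∀ i, G i)
    (w : α → (W →ₗ[F] F))
    (hb : ∀ j, ∀ b : J → α, h j (ext0 J (fun i => Y (b i) i.1)) = 0)
    (hE : EE (fun j l (b : J → α) =>
        w j (f (update (ext0 J (fun i => Y (b i) i.1)) i₀ (Y l i₀)))) ≠ 0)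
    (hopt : ∀ (Y : Option α → ∀ i, G i) (w : Option α → (W →ₗ[F] F)),
        (∀ j, ∀ b : J → Option α, h j (ext0 J (fun i => Y (b i) i.1)) = 0) →
        EE (fun j l (b : J → Option α) =>
          w j (f (update (ext0 J (fun i => Y (b i) i.1)) i₀ (Y l i₀)))) = 0) :
    ∃ f' g : (∀ i, G i) → W, ML F I f' ∧ (∀ x, f x = f' x + g x) ∧
      PR F I g ((Fintype.card α + 1) ^ (J.card + 1)) ∧
      ∃ V : (∀ i, G i) → Prop, (∀ x a, V (update x i₀ a) ↔ V x) ∧ (∀ x, V x → f' x = 0) ∧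
        Fintype.card (∀ i, G i) ≤ cnt V *
          Fintype.card F ^ (Fintype.card σ * (Fintype.card α + 1) ^ J.card) := by
  classical
  set E := EE (fun j l (b : J → α) =>
        w j (f (update (ext0 J (fun i => Y (b i) i.1)) i₀ (Y l i₀)))) with hEdef
  let R : (∀ i, G i) → Option α → (J → Option α) → F := fun x l b =>
    RR (fun j l (b : J → Option α) => w j (f (ptt I Y (idx i₀ l b) x))) l b
  have hR0 : ∀ x, R x none (fun _ => none) = E := by
    intro x
    simp only [R]
    rw [RR_none, hEdef]
    congr 1
    funext j l b
    rw [← ptt_eq hi hI]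
    rfl
  have hf0 : ∀ x, f (ptt I Y (idx i₀ none (fun _ : J => none)) x) = f x := by
    intro x
    refine dep_eq I f hf.indep _ _ ?_
    intro i hiI
    have : idx (α := α) i₀ none (fun _ : J => none) i = none := by
      simp [idx]
    simp [ptt, hiI, this]
  let V : (∀ i, G i) → Prop := fun x => ∀ p : σ × (J → Option α),
    h p.1 (ptt J Y (idx i₀ none p.2) x) = 0
  let N : Finset (Option α × (J → Option α)) := univ.erase (none, fun _ => none)
  let τ : (Option α × (J → Option α)) → (∀ i, G i) → F := fun p x => -(E⁻¹ * R x p.1 p.2)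
  let γ : (Option α × (J → Option α)) → (∀ i, G i) → W := fun p x =>
    f (ptt I Y (idx i₀ p.1 p.2) x)
  have hτ : ∀ p, ML F (I.filter (fun i => idx i₀ p.1 p.2 i ≠ none)) (τ p) := by
    intro p
    have := (RR_ML hi hI hf Y w p.1 p.2).const_smul (-E⁻¹)
    convert this using 2
    simp [τ, R]
  have hγ : ∀ p, ML F (I.filter (fun i => idx i₀ p.1 p.2 i = none)) (γ p) :=
    fun p => hf.comp_ptt subset_rfl Y _
  have hun : ∀ p : Option α × (J → Option α), I.filter (fun i => idx i₀ p.1 p.2 i ≠ none) ∪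
      I.filter (fun i => idx i₀ p.1 p.2 i = none) = I := by
    intro p
    rw [Finset.union_comm]
    exact Finset.filter_union_filter_not_eq _ _
  have hdis : ∀ p : Option α × (J → Option α),
      Disjoint (I.filter (fun i => idx i₀ p.1 p.2 i ≠ none))
      (I.filter (fun i => idx i₀ p.1 p.2 i = none)) := by
    intro p
    exact (Finset.disjoint_filter_filter_not _ _ _).symm
  let g : (∀ i, G i) → W := fun x => ∑ p ∈ N, τ p x • γ p x
  have hg : ML F I g := by
    refine ML.sum _ fun p _ => ?_
    have := (hτ p).smul' (hγ p) (hdis p)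
    rwa [hun p] at this
  refine ⟨fun x => f x + (-1 : F) • g x, g, hf.add' (hg.const_smul _), fun x => by simp, ?_, V,
    ?_, ?_, ?_⟩
  · refine ⟨{p // p ∈ N}, inferInstance, fun p => τ p.1, fun p => γ p.1,
      fun p => I.filter (fun i => idx i₀ p.1.1 p.1.2 i ≠ none),
      fun p => I.filter (fun i => idx i₀ p.1.1 p.1.2 i = none), ?_, ?_, ?_⟩
    · rw [Fintype.card_coe]
      refine (Finset.card_le_univ _).trans ?_
      rw [Fintype.card_prod, Fintype.card_fun, Fintype.card_option, Fintype.card_coe, pow_succ,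
        mul_comm]
    · intro p
      refine ⟨?_, hdis p.1, hun p.1, hτ p.1, hγ p.1⟩
      by_contra hcon
      rw [Finset.not_nonempty_iff_eq_empty, Finset.filter_eq_empty_iff] at hcon
      have hp := (Finset.mem_erase.1 p.2).1
      apply hp
      ext1
      · have := hcon (x := i₀) (by simp [hI])
        simpa [idx, hi] using this
      · funext i
        have := hcon (x := i.1) (by simp [hI])
        simpa [idx, i.2] using this
    · intro x
      exact (Finset.sum_coe_sort N (fun p => τ p x • γ p x)).symm
  · intro x a
    have : ∀ p : σ × (J → Option α), h p.1 (ptt J Y (idx i₀ none p.2) (update x i₀ a)) =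
        h p.1 (ptt J Y (idx i₀ none p.2) x) := by
      intro p
      rw [ptt_update_some _ _ _ _ (Or.inl hi)]
    simp only [V, this]
  · intro x hx
    have hsum : ∑ p : Option α × (J → Option α), R x p.1 p.2 • γ p x = 0 := by
      rw [← Module.forall_dual_apply_eq_zero_iff F]
      intro w0
      have := hopt (fun o => o.elim x Y) (fun o => o.elim w0 w) ?_
      · rw [EE_option] at this
        rw [map_sum, Fintype.sum_prod_type]
        rw [← this]
        refine Finset.sum_congr rfl fun l _ => Finset.sum_congr rfl fun b _ => ?_
        rw [map_smul, smul_eq_mul, mul_comm]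
        simp only [ptt_eq hi hI]
        rfl
      · intro j b
        rw [ptt_eq' i₀]
        exact hx (j, b)
    rw [← Finset.add_sum_erase _ _ (Finset.mem_univ (none, fun _ => none))] at hsum
    simp only [hR0] at hsum
    change E • f (ptt I Y (idx i₀ none (fun _ : J => none)) x) + _ = 0 at hsum
    rw [hf0] at hsum
    have hgx : g x = -(E⁻¹ • ∑ p ∈ N, R x p.1 p.2 • γ p x) := by
      simp only [g, τ, Finset.smul_sum, ← Finset.sum_neg_distrib]
      refine Finset.sum_congr rfl fun p _ => ?_
      rw [neg_smul, mul_smul]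
    change f x + (-1 : F) • g x = 0
    rw [hgx]
    have h2 : E⁻¹ • (E • f x + ∑ p ∈ N, R x p.1 p.2 • γ p x) = 0 := by rw [hsum, smul_zero]
    rw [smul_add, inv_smul_smul₀ hE] at h2
    rw [neg_one_smul, neg_neg]
    exact h2
  · have := density (fun (p : σ × (J → Option α)) x => h p.1 (ptt J Y (idx i₀ none p.2) x))
      (fun p => (A p.1).filter (fun i => idx i₀ none p.2 i = none))
      (fun p => (hh p.1).comp_ptt (hAJ p.1) Y _) ?_
    · rw [Fintype.card_prod, Fintype.card_fun, Fintype.card_option, Fintype.card_coe] at this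
      exact this
    · rintro ⟨j, b⟩
      rw [or_iff_not_imp_left]
      intro hne x
      rw [Finset.not_nonempty_iff_eq_empty, Finset.filter_eq_empty_iff] at hne
      refine box_vanish (hh j) (hAJ j) (hA j) Y (hb j) _ ?_
      intro i hiA
      obtain ⟨a, ha⟩ := Option.ne_none_iff_exists'.1 (hne hiA)
      refine ⟨a, ?_⟩
      simp only [ptt, hAJ j hiA, if_true]
      simp only at ha
      rw [ha]; rfl

end stage3

/-- Partition rank theorem: positive density of zeros implies small partition rank. -/
theorem partition_rank (k : ℕ) : ∃ p : ℕ → ℕ, PolyB p ∧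
    ∀ (F : Type) [Field F] [Fintype F] (ι : Type) [Fintype ι] [DecidableEq ι] (G : ι → Type)
      [∀ i, AddCommGroup (G i)] [∀ i, Module F (G i)] [∀ i, Fintype (G i)]
      (W : Type) [AddCommGroup W] [Module F W] (I : Finset ι) (f : (∀ i, G i) → W) (t : ℕ),
      I.card = k → ML F I f →
      Fintype.card (∀ i, G i) ≤ cnt (fun x => f x = 0) * Fintype.card F ^ t →
      PR F I f (p t) := by
  induction k with
  | zero =>
    refine ⟨fun _ => 0, PolyB.const 0, ?_⟩
    intro F _ _ ι _ _ G _ _ _ W _ _ I f t hk hf hd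
    rw [Finset.card_eq_zero] at hk
    subst hk
    have h0 : ∃ x, f x = 0 := by
      by_contra hcon
      push Not at hcon
      have : cnt (fun x => f x = 0) = 0 := by simp [cnt, hcon]
      rw [this, zero_mul] at hd
      have : 0 < Fintype.card (∀ i, G i) := Fintype.card_pos
      omega
    obtain ⟨x₀, hx₀⟩ := h0
    refine ⟨Empty, inferInstance, fun j => j.elim, fun j => j.elim, fun j => j.elim,
      fun j => j.elim, by simp, fun j => j.elim, ?_⟩
    intro x
    rw [dep_eq ∅ f hf.indep x x₀ (by simp), hx₀]
    simp
  | succ k ih =>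
    obtain ⟨p, hp, ih⟩ := ih
    let s : ℕ → ℕ := fun t => p (t + 1)
    let n : ℕ → ℕ := fun t => 2 ^ k * (t + (s t + 1) * k) + 1
    have hs : PolyB s := hp.comp (PolyB.id.add (PolyB.const 1))
    have hn : PolyB n := ((PolyB.const (2 ^ k)).mul
      (PolyB.id.add ((hs.add (PolyB.const 1)).mul (PolyB.const k)))).add (PolyB.const 1)
    refine ⟨fun t => n t ^ (k + 1) + p (s t * n t ^ k), (hn.pow _).add
      (hp.comp (hs.mul (hn.pow k))), ?_⟩
    intro F _ _ ι _ _ G _ _ _ W _ _ I f t hk hf hd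
    classical
    obtain ⟨i₀, J, hi, hI, hJ⟩ := Finset.card_eq_succ.1 hk
    have hi₀ : i₀ ∈ I := by simp [← hI]
    obtain ⟨σ, fσ, h, A, hσ, hA, hAJ, hh, hr⟩ := stage1 hi hI.symm hf hi₀ t (s t) hd
      (fun g hg hdg => ih F ι G W J g (t + 1) hJ hg hdg)
    obtain ⟨α, fα, dα, Y, w, hα, hb, hE, hopt⟩ := stage2 hi hI.symm hf hi₀ h A hh hA hAJ (n t)
      (fun x hx => by have := hr x hx; rw [hJ] at this; simp only [n]; omega)
    obtain ⟨f', g, hf', hfg, hPR, V, hVu, hV0, hVd⟩ := stage3 hi hI.symm hf h A hh hA hAJ Y w hb hE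
      hopt
    have hML : ML F J (fun x => hf'.lin hi₀ x) := by
      refine ⟨?_, ?_, ?_⟩
      · intro i hiJ x a b
        ext u
        exact (hf'.slice hi hI.symm u).add i hiJ x a b
      · intro i hiJ x c a
        ext u
        exact (hf'.slice hi hI.symm u).smul i hiJ x c a
      · intro i hiJ x a
        ext u
        exact (hf'.slice hi hI.symm u).indep i hiJ x a
    have hVz : cnt V ≤ cnt (fun x => hf'.lin hi₀ x = 0) := by
      apply cnt_mono
      intro x hx
      ext u
      simp only [ML.lin_apply, LinearMap.zero_apply]
      exact hV0 _ ((hVu x u).2 hx)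
    have hle : Fintype.card σ * (Fintype.card α + 1) ^ J.card ≤ s t * n t ^ k := by
      rw [hJ]
      exact Nat.mul_le_mul hσ (Nat.pow_le_pow_left hα _)
    have hPR2 := ih F ι G (G i₀ →ₗ[F] W) J (fun x => hf'.lin hi₀ x) (s t * n t ^ k) hJ hML
      (hVd.trans (Nat.mul_le_mul hVz (Nat.pow_le_pow_right Fintype.card_pos hle)))
    obtain ⟨σ1, f1, h1, C1, A1, B1, hc1, hAB1, he1⟩ := hPR
    obtain ⟨σ2, f2, h2, C2, A2, B2, hc2, hAB2, he2⟩ := hPR2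
    have hB2 : ∀ j, i₀ ∉ B2 j := by
      intro j hj
      apply hi
      rw [← (hAB2 j).2.2.1]
      exact Finset.mem_union_right _ hj
    have hA2 : ∀ j, i₀ ∉ A2 j := by
      intro j hj
      apply hi
      rw [← (hAB2 j).2.2.1]
      exact Finset.mem_union_left _ hj
    refine ⟨σ1 ⊕ σ2, inferInstance, Sum.elim h1 h2,
      Sum.elim C1 (fun j x => C2 j x (x i₀)), Sum.elim A1 A2,
      Sum.elim B1 (fun j => insert i₀ (B2 j)), ?_, ?_, ?_⟩
    · rw [Fintype.card_sum]
      refine Nat.add_le_add (hc1.trans ?_) hc2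
      rw [hJ]
      exact Nat.pow_le_pow_left hα _
    · rintro (j | j)
      · exact hAB1 j
      · refine ⟨(hAB2 j).1, ?_, ?_, (hAB2 j).2.2.2.1, ?_⟩
        · simp only [Sum.elim_inr]
          rw [Finset.disjoint_insert_right]
          exact ⟨hA2 j, (hAB2 j).2.1⟩
        · simp only [Sum.elim_inr]
          rw [Finset.union_insert, (hAB2 j).2.2.1, hI]
        · simp only [Sum.elim_inr]
          have hC := (hAB2 j).2.2.2.2
          refine ⟨?_, ?_, ?_⟩
          · intro i hiB x a b
            by_cases hii : i = i₀
            · subst hii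
              simp only [update_self, hC.indep i (hB2 j), map_add]
            · have : i ∈ B2 j := by simpa [hii] using hiB
              rw [update_of_ne (Ne.symm hii), update_of_ne (Ne.symm hii),
                update_of_ne (Ne.symm hii), hC.add i this]
              rfl
          · intro i hiB x c a
            by_cases hii : i = i₀
            · subst hii
              simp only [update_self, hC.indep i (hB2 j), map_smul]
            · have : i ∈ B2 j := by simpa [hii] using hiB
              rw [update_of_ne (Ne.symm hii), update_of_ne (Ne.symm hii), hC.smul i this]
              rfl
          · intro i hiB x a
            rw [Finset.mem_insert, not_or] at hiB
            rw [update_of_ne (Ne.symm hiB.1), hC.indep i hiB.2]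
    · intro x
      rw [hfg, he1, Fintype.sum_sum_type, add_comm]
      congr 1
      have := congrArg (fun L => L (x i₀)) (he2 x)
      simp only [ML.lin_apply, update_eq_self] at this
      rw [this]
      simp

section top
variable {F : Type} [Field F] [Fintype F] {ι : Type} [Fintype ι] [DecidableEq ι] {G : ι → Type}
  [∀ i, AddCommGroup (G i)] [∀ i, Module F (G i)] [∀ i, Fintype (G i)]
  {W : Type} [AddCommGroup W] [Module F W]

theorem cnt_coset {U : Type} [AddCommGroup U] [Module F U] [Fintype U] (L : U →ₗ[F] W) (c : W) :
    cnt (fun a => L a + c = 0) ≤ cnt (fun a => L a = 0) := by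
  by_cases h : ∃ a₀, L a₀ + c = 0
  · obtain ⟨a₀, h₀⟩ := h
    refine cnt_inj (fun a => a - a₀) sub_left_injective ?_
    intro a ha
    rw [map_sub]
    have : L a + c = L a₀ + c := by rw [ha, h₀]
    rw [add_right_cancel this, sub_self]
  · push Not at h
    simp [cnt, h]

theorem top_zeros {D : Finset (Finset ι)} {I : Finset ι} (hID : I ∈ D)
    (hmax : ∀ J ∈ D, I ⊆ J → J = I) (Φ : Finset ι → (∀ i, G i) → W)
    (hΦ : ∀ J ∈ D, ML F J (Φ J)) :
    cnt (fun x => ∑ J ∈ D, Φ J x = 0) ≤ cnt (fun x => Φ I x = 0) := by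
  classical
  have key : ∀ K : Finset ι, K ⊆ I → cnt (fun x => ∑ J ∈ D, Φ J x = 0) ≤
      cnt (fun x => ∑ J ∈ D with K ⊆ J, Φ J x = 0) := by
    intro K
    induction K using Finset.induction_on with
    | empty => intro _; simp
    | insert i K hiK ih =>
      intro hK
      refine (ih fun j hj => hK (by simp [hj])).trans ?_
      have hpos : 0 < Fintype.card (G i) := Fintype.card_pos
      refine Nat.le_of_mul_le_mul_left ?_ hpos
      rw [← sum_cnt_update i, ← sum_cnt_update i]
      refine Finset.sum_le_sum fun x _ => ?_
      let L : G i →ₗ[F] W := ∑ J ∈ (D.filter (fun J => insert i K ⊆ J)).attach,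
        (hΦ J.1 (Finset.mem_filter.1 J.2).1).lin
          ((Finset.mem_filter.1 J.2).2 (Finset.mem_insert_self i K)) x
      have hL : ∀ a, L a = ∑ J ∈ D with insert i K ⊆ J, Φ J (update x i a) := by
        intro a
        simp only [L, LinearMap.sum_apply, ML.lin_apply]
        exact Finset.sum_attach (D.filter (fun J => insert i K ⊆ J))
          (fun J => Φ J (update x i a))
      let c : W := ∑ J ∈ D with K ⊆ J ∧ i ∉ J, Φ J x
      have hs : ∀ a, ∑ J ∈ D with K ⊆ J, Φ J (update x i a) = L a + c := by
        intro a
        rw [hL, ← Finset.sum_filter_add_sum_filter_not (D.filter (fun J => K ⊆ J))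
          (fun J => i ∈ J), Finset.filter_filter, Finset.filter_filter]
        congr 1
        · refine Finset.sum_congr ?_ fun _ _ => rfl
          ext J
          simp only [Finset.mem_filter, Finset.insert_subset_iff]
          tauto
        · refine Finset.sum_congr rfl fun J hJ => ?_
          rw [Finset.mem_filter] at hJ
          exact (hΦ J hJ.1).indep i hJ.2.2 x a
      simp only [hs, ← hL]
      exact cnt_coset L c
  refine (key I subset_rfl).trans (cnt_mono ?_)
  intro x hx
  have : D.filter (fun J => I ⊆ J) = {I} := by
    ext J
    simp only [Finset.mem_filter, Finset.mem_singleton]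
    constructor
    · rintro ⟨h1, h2⟩; exact hmax J h1 h2
    · rintro rfl; exact ⟨hID, subset_rfl⟩
  rwa [this, Finset.sum_singleton] at hx

end top

theorem simul (ι : Type) [Fintype ι] [DecidableEq ι] (m : ℕ) : ∀ (D : Finset (Finset ι)),
    D.card = m → (∀ I ∈ D, ∀ J, J ⊆ I → J ∈ D) → ∃ p : ℕ → ℕ, PolyB p ∧
    ∀ (F : Type) [Field F] [Fintype F] (G : ι → Type)
      [∀ i, AddCommGroup (G i)] [∀ i, Module F (G i)] [∀ i, Fintype (G i)]
      (W : Type) [AddCommGroup W] [Module F W] (ν : Type) [Fintype ν]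
      (Φ : ν → Finset ι → (∀ i, G i) → W), (∀ i, ∀ I ∈ D, ML F I (Φ i I)) →
      ∀ t N : ℕ, Fintype.card ν + t ≤ N →
      ∃ (σ : Type) (_ : Fintype σ) (β : σ → (∀ i, G i) → F) (T : σ → Finset ι),
        Fintype.card σ ≤ p N ∧ (∀ j, ML F (T j) (β j)) ∧
        cnt (fun x => ¬ ∀ c : ν → F, ∑ i, c i • ∑ I ∈ D, Φ i I x = 0 → ∀ x',
          (∀ j, β j x' = β j x) → ∑ i, c i • ∑ I ∈ D, Φ i I x' = 0) * Fintype.card F ^ t ≤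
          Fintype.card (∀ i, G i) := by
  induction m with
  | zero =>
    intro D hD _
    rw [Finset.card_eq_zero] at hD
    subst hD
    refine ⟨fun _ => 0, PolyB.const 0, ?_⟩
    intro F _ _ G _ _ _ W _ _ ν _ Φ hΦ t N hN
    refine ⟨Empty, inferInstance, fun j => j.elim, fun j => j.elim, by simp, fun j => j.elim, ?_⟩
    simp [cnt]
  | succ m ih =>
    intro D hD hlow
    have hne : D.Nonempty := by rw [← Finset.card_pos]; omega
    obtain ⟨I, hIm⟩ := D.exists_maximal hne
    have hID : I ∈ D := hIm.1
    have hmax : ∀ J ∈ D, I ⊆ J → J = I := fun J hJ h => subset_antisymm (hIm.2 hJ h) h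
    obtain ⟨p', hp', ih⟩ := ih (D.erase I) (by rw [Finset.card_erase_of_mem hID]; omega) (by
      intro K hK J hJ
      rw [Finset.mem_erase] at hK ⊢
      refine ⟨?_, hlow K hK.2 J hJ⟩
      rintro rfl
      exact hK.1 (hmax K hK.2 hJ))
    obtain ⟨pk, hpk, hPR⟩ := partition_rank I.card
    let s : ℕ → ℕ := fun N => N * pk (N + 1)
    have hs : PolyB s := PolyB.id.mul (hpk.comp (PolyB.id.add (PolyB.const 1)))
    refine ⟨fun N => p' (N + s N + 1) + s N,
      (hp'.comp ((PolyB.id.add hs).add (PolyB.const 1))).add hs, ?_⟩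
    intro F _ _ G _ _ _ W _ _ ν _ Φ hΦ t N hN
    classical
    set q := Fintype.card F with hq
    have hq2 : 2 ≤ q := two_le_card
    let S : (ν → F) → (∀ i, G i) → W := fun c x => ∑ i, c i • ∑ I ∈ D, Φ i I x
    let Pc : Set (ν → F) := {c | Fintype.card (∀ i, G i) ≤ cnt (fun x => S c x = 0) * q ^ (N + 1)}
    obtain ⟨b, hbP, hbspan, hbli⟩ := exists_linearIndependent F Pc
    have hbcard : Fintype.card b ≤ N := by
      have := hbli.fintype_card_le_finrank
      rw [Module.finrank_fintype_fun_eq_card] at this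
      exact le_trans this (by omega)
    have hcML : ∀ (c : ν → F) J, J ∈ D → ML F J (fun x => ∑ i, c i • Φ i J x) := fun c J hJ =>
      ML.sum _ fun i _ => (hΦ i J hJ).const_smul _
    have hdec : ∀ c : b, PR F I (fun x => ∑ i, c.1 i • Φ i I x) (pk (N + 1)) := by
      intro c
      refine hPR F ι G W I _ (N + 1) rfl (hcML c.1 I hID) ?_
      refine (show Fintype.card (∀ i, G i) ≤ _ from hbP c.2).trans (Nat.mul_le_mul_right _ ?_)
      refine le_trans (le_of_eq ?_) (top_zeros hID hmax (fun J x => ∑ i, c.1 i • Φ i J x)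
        (hcML c.1))
      refine cnt_congr fun x => ?_
      simp only [S, Finset.smul_sum]
      rw [Finset.sum_comm]
    choose τ fτ h C A B hτ hAB hdec using hdec
    have hBD : ∀ c j, B c j ∈ D.erase I := by
      intro c j
      rw [Finset.mem_erase]
      have hsub : B c j ⊆ I := by rw [← (hAB c j).2.2.1]; exact Finset.subset_union_right
      refine ⟨?_, hlow I hID _ hsub⟩
      intro heq
      obtain ⟨i, hi⟩ := (hAB c j).1
      have h1 : i ∈ I := by rw [← (hAB c j).2.2.1]; exact Finset.mem_union_left _ hi
      rw [← heq] at h1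
      exact Finset.disjoint_left.1 (hAB c j).2.1 hi h1
    have hsig : Fintype.card (Σ c, τ c) ≤ s N := by
      rw [Fintype.card_sigma]
      calc _ ≤ ∑ c : b, pk (N + 1) := Finset.sum_le_sum fun c _ => hτ c
        _ = Fintype.card b * pk (N + 1) := by simp
        _ ≤ s N := Nat.mul_le_mul_right _ hbcard
    let Φ' : ν ⊕ (Σ c, τ c) → Finset ι → (∀ i, G i) → W := Sum.elim Φ
      (fun d J x => if J = B d.1 d.2 then C d.1 d.2 x else 0)
    obtain ⟨σ, fσ, β, T, hσ, hβ, hbad⟩ := ih F G W (ν ⊕ (Σ c, τ c)) Φ' (by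
      rintro (i | d) J hJ
      · exact hΦ i J (Finset.mem_of_mem_erase hJ)
      · by_cases hJB : J = B d.1 d.2
        · simp only [Φ', Sum.elim_inr, hJB, if_true]
          exact (hAB d.1 d.2).2.2.2.2
        · simp only [Φ', Sum.elim_inr, hJB, if_false]
          exact ML.zero _) (t + 1) (N + s N + 1) (by
        rw [Fintype.card_sum]; omega)
    let S' : (ν ⊕ (Σ c, τ c) → F) → (∀ i, G i) → W := fun c x =>
      ∑ i, c i • ∑ I ∈ D.erase I, Φ' i I x
    refine ⟨σ ⊕ (Σ c, τ c), inferInstance, Sum.elim β (fun d => h d.1 d.2),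
      Sum.elim T (fun d => A d.1 d.2), ?_, ?_, ?_⟩
    · rw [Fintype.card_sum]
      exact Nat.add_le_add hσ hsig
    · rintro (j | d)
      · exact hβ j
      · exact (hAB d.1 d.2).2.2.2.1
    set bad' := cnt (fun x => ¬ ∀ c : ν ⊕ (Σ c, τ c) → F, S' c x = 0 → ∀ x',
          (∀ j, β j x' = β j x) → S' c x' = 0) with hbad'
    have hmain : cnt (fun x => ¬ ∀ c : ν → F, S c x = 0 → ∀ x',
          (∀ j : σ ⊕ (Σ c, τ c), (Sum.elim β (fun d => h d.1 d.2) j : _ → F) x' =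
            (Sum.elim β (fun d => h d.1 d.2) j : _ → F) x) → S c x' = 0) ≤
        bad' + ∑ c : ν → F, cnt (fun x => c ∉ Pc ∧ S c x = 0) := by
      refine le_trans ?_ (Nat.add_le_add_left (cnt_exists _) _)
      refine le_trans ?_ (cnt_or _ _)
      apply cnt_mono
      intro x
      contrapose!
      rintro ⟨hx1, hx2⟩ c hc x' hx'
      have hcP : c ∈ Pc := by
        by_contra hcon
        exact hx2 c hcon hc
      have hcs : c ∈ Submodule.span F (Set.range (Subtype.val : b → ν → F)) := by
        rw [Subtype.range_coe, hbspan]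
        exact Submodule.subset_span hcP
      obtain ⟨a, ha⟩ := (Submodule.mem_span_range_iff_exists_fun F).1 hcs
      let c' : ν ⊕ (Σ c, τ c) → F := Sum.elim c (fun d => a d.1 * h d.1 d.2 x)
      have hS : ∀ y, (∀ c j, h c j y = h c j x) → S c y = S' c' y := by
        intro y hy
        have e1 : S c y = ∑ i, c i • ∑ J ∈ D.erase I, Φ i J y + ∑ i, c i • Φ i I y := by
          simp only [S]
          rw [← Finset.sum_add_distrib]
          refine Finset.sum_congr rfl fun i _ => ?_
          rw [← smul_add, Finset.sum_erase_add _ _ hID]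
        have e2 : ∑ i, c i • Φ i I y = ∑ d : b, a d • ∑ i, d.1 i • Φ i I y := by
          have := congrArg (Fintype.linearCombination F (fun i => Φ i I y)) ha
          rw [map_sum] at this
          simp only [map_smul, Fintype.linearCombination_apply] at this
          exact this.symm
        rw [e1, e2]
        simp only [S', Fintype.sum_sum_type, Φ', c', Sum.elim_inl, Sum.elim_inr]
        congr 1
        rw [Fintype.sum_sigma]
        refine Finset.sum_congr rfl fun d _ => ?_
        rw [show ∑ i, d.1 i • Φ i I y = _ from hdec d y, Finset.smul_sum]
        refine Finset.sum_congr rfl fun j _ => ?_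
        rw [Finset.sum_ite_eq' (D.erase I), if_pos (hBD d j), hy, mul_smul]
      rw [hS x' (fun d j => hx' (Sum.inr ⟨d, j⟩))]
      rw [hS x (fun _ _ => rfl)] at hc
      exact hx1 c' hc x' (fun j => hx' (Sum.inl j))
    have hsum : (∑ c : ν → F, cnt (fun x => c ∉ Pc ∧ S c x = 0)) * q ^ (t + 1) ≤
        Fintype.card (∀ i, G i) := by
      have h1 : (∑ c : ν → F, cnt (fun x => c ∉ Pc ∧ S c x = 0)) * q ^ (N + 1) ≤
          q ^ Fintype.card ν * Fintype.card (∀ i, G i) := by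
        rw [Finset.sum_mul]
        calc _ ≤ ∑ c : ν → F, Fintype.card (∀ i, G i) := by
              refine Finset.sum_le_sum fun c _ => ?_
              by_cases hc : c ∈ Pc
              · have : cnt (fun x => c ∉ Pc ∧ S c x = 0) = 0 := by simp [cnt, hc]
                rw [this]; simp
              · refine le_trans (Nat.mul_le_mul_right _ (cnt_mono fun x hx => hx.2)) ?_
                exact (not_le.1 hc).le
          _ = _ := by simp [hq]
      refine Nat.le_of_mul_le_mul_left ?_ (Nat.pow_pos (n := Fintype.card ν) (show 0 < q by omega))
      calc _ = (∑ c : ν → F, cnt (fun x => c ∉ Pc ∧ S c x = 0)) *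
            q ^ (Fintype.card ν + t + 1) := by ring
        _ ≤ (∑ c : ν → F, cnt (fun x => c ∉ Pc ∧ S c x = 0)) * q ^ (N + 1) :=
            Nat.mul_le_mul_left _ (Nat.pow_le_pow_right (by omega) (by omega))
        _ ≤ _ := h1
    refine Nat.le_of_mul_le_mul_left ?_ (show 0 < q by omega)
    change bad' * q ^ (t + 1) ≤ _ at hbad
    calc _ ≤ q * ((bad' + ∑ c : ν → F, cnt (fun x => c ∉ Pc ∧ S c x = 0)) * q ^ t) :=
          Nat.mul_le_mul_left _ (Nat.mul_le_mul_right _ hmain)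
      _ = bad' * q ^ (t + 1) + (∑ c : ν → F, cnt (fun x => c ∉ Pc ∧ S c x = 0)) * q ^ (t + 1) := by
          ring
      _ ≤ Fintype.card (∀ i, G i) + Fintype.card (∀ i, G i) := Nat.add_le_add hbad hsum
      _ ≤ _ := by nlinarith

section ma
variable {F : Type} [Field F] {ι : Type} [Fintype ι] [DecidableEq ι] {G : ι → Type}
  [∀ i, AddCommGroup (G i)] [∀ i, Module F (G i)]
  {W : Type} [AddCommGroup W] [Module F W]

theorem ma_iff (f : (∀ i, G i) → W) : IsMultiaffine F f ↔ ∀ i (x : ∀ i, G i),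
    (∀ a b, f (update x i (a + b)) + f (update x i 0) = f (update x i a) + f (update x i b)) ∧
    ∀ (c : F) a, f (update x i (c • a)) - f (update x i 0) =
      c • (f (update x i a) - f (update x i 0)) := by
  constructor
  · intro h i x
    obtain ⟨g, c, hg⟩ := h i x
    constructor
    · intro a b
      simp only [hg, map_add, map_zero]
      abel
    · intro r a
      simp only [hg, map_smul, map_zero]
      simp
  · intro h i x
    refine ⟨⟨⟨fun a => f (update x i a) - f (update x i 0), ?_⟩, (h i x).2⟩, f (update x i 0), ?_⟩
    · intro a b
      rw [eq_sub_of_add_eq ((h i x).1 a b)]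
      abel
    · intro y
      simp

theorem ML.ma {I : Finset ι} {f : (∀ i, G i) → W} (hf : ML F I f) : IsMultiaffine F f := by
  rw [ma_iff]
  intro i x
  by_cases hi : i ∈ I
  · refine ⟨fun a b => ?_, fun c a => ?_⟩
    · rw [hf.add i hi, hf.zero_of_zero hi, add_zero]
    · rw [hf.smul i hi, hf.zero_of_zero hi, sub_zero, sub_zero]
  · simp [hf.indep i hi]

theorem ma_pi {κ : Type} (f : (∀ i, G i) → (κ → F))
    (h : ∀ j, IsMultiaffine F (fun x => f x j)) : IsMultiaffine F f := by
  rw [ma_iff]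
  intro i x
  refine ⟨fun a b => ?_, fun c a => ?_⟩
  · funext j
    exact (((ma_iff _).1 (h j)) i x).1 a b
  · funext j
    exact (((ma_iff _).1 (h j)) i x).2 c a

theorem ma_proj {κ : Type} (f : (∀ i, G i) → (κ → F)) (h : IsMultiaffine F f) (j : κ) :
    IsMultiaffine F (fun x => f x j) := by
  rw [ma_iff] at h ⊢
  intro i x
  refine ⟨fun a b => ?_, fun c a => ?_⟩
  · exact congrFun ((h i x).1 a b) j
  · exact congrFun ((h i x).2 c a) j

theorem ma_slice {f : (∀ i, G i) → W} (hf : IsMultiaffine F f) (i₀ : ι) (u : G i₀) :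
    IsMultiaffine F (fun x => f (update x i₀ u)) := by
  rw [ma_iff] at hf ⊢
  intro i x
  by_cases hi : i = i₀
  · subst hi; simp
  · refine ⟨fun a b => ?_, fun c a => ?_⟩
    · simp only [update_comm hi]
      exact (hf i _).1 a b
    · simp only [update_comm hi]
      exact (hf i _).2 c a

theorem ma_sub {f g : (∀ i, G i) → W} (hf : IsMultiaffine F f) (hg : IsMultiaffine F g) :
    IsMultiaffine F (fun x => f x - g x) := by
  intro i x
  obtain ⟨a, b, h1⟩ := hf i x
  obtain ⟨c, d, h2⟩ := hg i x
  refine ⟨a - c, b - d, fun y => ?_⟩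
  simp only [h1, h2, LinearMap.sub_apply]
  abel

theorem ML.eval {i₀ : ι} {B : Finset ι} (hB : i₀ ∉ B) {C : (∀ i, G i) → (G i₀ →ₗ[F] W)}
    (hC : ML F B C) : ML F (insert i₀ B) (fun x => C x (x i₀)) := by
  refine ⟨?_, ?_, ?_⟩
  · intro i hiB x a b
    by_cases hii : i = i₀
    · subst hii
      simp only [update_self, hC.indep i hB, map_add]
    · have : i ∈ B := by simpa [hii] using hiB
      rw [update_of_ne (Ne.symm hii), update_of_ne (Ne.symm hii),
        update_of_ne (Ne.symm hii), hC.add i this]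
      rfl
  · intro i hiB x c a
    by_cases hii : i = i₀
    · subst hii
      simp only [update_self, hC.indep i hB, map_smul]
    · have : i ∈ B := by simpa [hii] using hiB
      rw [update_of_ne (Ne.symm hii), update_of_ne (Ne.symm hii), hC.smul i this]
      rfl
  · intro i hiB x a
    rw [Finset.mem_insert, not_or] at hiB
    rw [update_of_ne (Ne.symm hiB.1), hC.indep i hiB.2]

/-- the linear part of a map in one coordinate -/
def malin {f : (∀ i, G i) → W} (hf : IsMultiaffine F f) (i : ι) (x : ∀ i, G i) :
    G i →ₗ[F] W where
  toFun a := f (update x i a) - f (update x i 0)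
  map_add' a b := by
    rw [eq_sub_of_add_eq (((ma_iff f).1 hf i x).1 a b)]
    abel
  map_smul' := ((ma_iff f).1 hf i x).2

theorem malin_apply {f : (∀ i, G i) → W} (hf : IsMultiaffine F f) (i : ι) (x : ∀ i, G i)
    (a : G i) : malin hf i x a = f (update x i a) - f (update x i 0) := rfl

theorem malin_ma {f : (∀ i, G i) → W} (hf : IsMultiaffine F f) (i : ι) :
    IsMultiaffine F (fun x => malin hf i x) := by
  rw [ma_iff]
  intro j x
  constructor
  · intro a b
    ext u
    exact ((ma_iff _).1 (ma_sub (ma_slice hf i u) (ma_slice hf i 0)) j x).1 a b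
  · intro c a
    ext u
    exact ((ma_iff _).1 (ma_sub (ma_slice hf i u) (ma_slice hf i 0)) j x).2 c a

end ma

theorem ma_decomp {F : Type} [Field F] {ι : Type} [Fintype ι] [DecidableEq ι] {G : ι → Type}
    [∀ i, AddCommGroup (G i)] [∀ i, Module F (G i)] (K : Finset ι) :
    ∀ (W : Type) [AddCommGroup W] [Module F W] (f : (∀ i, G i) → W), IsMultiaffine F f →
      (∀ i ∉ K, ∀ x a, f (update x i a) = f x) →
      ∃ Φ : Finset ι → (∀ i, G i) → W, (∀ I ⊆ K, ML F I (Φ I)) ∧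
        ∀ x, f x = ∑ I ∈ K.powerset, Φ I x := by
  induction K using Finset.induction_on with
  | empty =>
    intro W _ _ f hf h0
    refine ⟨fun _ => f, ?_, by simp⟩
    intro I hI
    rw [Finset.subset_empty] at hI
    subst hI
    exact ⟨by simp, by simp, h0⟩
  | insert i₀ K hi ih =>
    intro W _ _ f hf h0
    have hin : ∀ u : G i₀, ∀ i ∉ K, ∀ (x : ∀ i, G i) (a : G i),
        f (update (update x i a) i₀ u) = f (update x i₀ u) := by
      intro u i hiK x a
      by_cases hii : i = i₀
      · subst hii; simp
      · rw [update_comm hii, h0 i (by simp [hii, hiK])]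
    obtain ⟨Φ, hΦ, hΦs⟩ := ih W (fun x => f (update x i₀ 0)) (ma_slice hf i₀ 0) (hin 0)
    obtain ⟨Ψ, hΨ, hΨs⟩ := ih (G i₀ →ₗ[F] W) (fun x => malin hf i₀ x) (malin_ma hf i₀) (by
      intro i hiK x a
      ext u
      simp only [malin_apply, hin _ i hiK])
    refine ⟨fun I x => if i₀ ∈ I then Ψ (I.erase i₀) x (x i₀) else Φ I x, ?_, ?_⟩
    · intro I hI
      by_cases h : i₀ ∈ I
      · simp only [h, if_true]
        have hsub : I.erase i₀ ⊆ K := by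
          intro j hj
          rw [Finset.mem_erase] at hj
          simpa [hj.1] using hI hj.2
        have := (hΨ (I.erase i₀) hsub).eval (Finset.notMem_erase i₀ I)
        rwa [Finset.insert_erase h] at this
      · simp only [h, if_false]
        exact hΦ I ((Finset.subset_insert_iff_of_notMem h).1 hI)
    · intro x
      rw [Finset.sum_powerset_insert hi]
      have e1 : ∑ I ∈ K.powerset, (if i₀ ∈ I then Ψ (I.erase i₀) x (x i₀) else Φ I x) =
          f (update x i₀ 0) := by
        rw [hΦs x]
        refine Finset.sum_congr rfl fun I hI => ?_
        rw [if_neg (fun h => hi (Finset.mem_powerset.1 hI h))]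
      have e2 : ∑ I ∈ K.powerset, (if i₀ ∈ insert i₀ I then
          Ψ ((insert i₀ I).erase i₀) x (x i₀) else Φ (insert i₀ I) x) =
          f x - f (update x i₀ 0) := by
        have := congrArg (fun L => L (x i₀)) (hΨs x)
        simp only [malin_apply, update_eq_self, LinearMap.sum_apply] at this
        rw [this]
        refine Finset.sum_congr rfl fun I hI => ?_
        rw [if_pos (Finset.mem_insert_self _ _),
          Finset.erase_insert (fun h => hi (Finset.mem_powerset.1 hI h))]
      rw [e1, e2]
      abel

section core
variable {F : Type} [Field F] [Fintype F] {U : Type} [AddCommGroup U] [Module F U] [Fintype U]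

theorem cnt_pi {X : Type} [Fintype X] (P : X → Prop) (M : ℕ) :
    cnt (fun y : Fin M → X => ∀ j, P (y j)) = cnt P ^ M := by
  classical
  have : (univ.filter (fun y : Fin M → X => ∀ j, P (y j))) =
      Fintype.piFinset (fun _ => univ.filter P) := by
    ext y; simp
  unfold cnt
  rw [← Fintype.card_piFinset_const, ← this]
  congr!

theorem choose_pts {X ν : Type} [Fintype X] [Fintype ν] (A : X → ν → (U →ₗ[F] F)) (M : ℕ) :
    ∃ y : Fin M → U, cnt (fun x => ∃ c : ν → F, ∑ i, c i • A x i ≠ 0 ∧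
      ∀ j, (∑ i, c i • A x i) (y j) = 0) * Fintype.card F ^ M ≤
      Fintype.card X * Fintype.card F ^ Fintype.card ν := by
  classical
  set q := Fintype.card F with hq
  have key : ∀ L : U →ₗ[F] F, cnt (fun y : Fin M → U => L ≠ 0 ∧ ∀ j, L (y j) = 0) * q ^ M ≤
      Fintype.card U ^ M := by
    intro L
    by_cases hL : L = 0
    · have : cnt (fun y : Fin M → U => L ≠ 0 ∧ ∀ j, L (y j) = 0) = 0 := by simp [cnt, hL]
      rw [this]; simp
    · have h1 : cnt (fun y : Fin M → U => L ≠ 0 ∧ ∀ j, L (y j) = 0) ≤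
          cnt (fun a => L a = 0) ^ M := by
        rw [← cnt_pi]
        exact cnt_mono fun y hy => hy.2
      refine (Nat.mul_le_mul_right _ h1).trans ?_
      rw [← mul_pow]
      refine Nat.pow_le_pow_left ?_ _
      rw [← card_ker_mul L]
      refine Nat.mul_le_mul_left _ ?_
      have hr : 1 ≤ Module.finrank F (LinearMap.range L) := by
        rw [Nat.one_le_iff_ne_zero]
        intro h0
        rw [Submodule.finrank_eq_zero, LinearMap.range_eq_bot] at h0
        exact hL h0
      calc q = q ^ 1 := (pow_one q).symm
        _ ≤ _ := Nat.pow_le_pow_right Fintype.card_pos hr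
  have := Finset.exists_le_of_sum_le (s := (univ : Finset (Fin M → U)))
    (f := fun y => cnt (fun x => ∃ c : ν → F, ∑ i, c i • A x i ≠ 0 ∧
      ∀ j, (∑ i, c i • A x i) (y j) = 0) * q ^ M)
    (g := fun _ => Fintype.card X * q ^ Fintype.card ν) univ_nonempty ?_
  · obtain ⟨y, -, hy⟩ := this
    exact ⟨y, hy⟩
  · rw [Finset.sum_const, Finset.card_univ, Fintype.card_fun, Fintype.card_fin, smul_eq_mul,
      ← Finset.sum_mul]
    have h1 : ∑ y : Fin M → U, cnt (fun x => ∃ c : ν → F, ∑ i, c i • A x i ≠ 0 ∧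
        ∀ j, (∑ i, c i • A x i) (y j) = 0) =
        ∑ x : X, cnt (fun y : Fin M → U => ∃ c : ν → F, ∑ i, c i • A x i ≠ 0 ∧
          ∀ j, (∑ i, c i • A x i) (y j) = 0) := by
      simp_rw [cnt_eq_sum]
      rw [Finset.sum_comm]
    rw [h1, Finset.sum_mul]
    calc _ ≤ ∑ x : X, ∑ c : ν → F, Fintype.card U ^ M := by
          refine Finset.sum_le_sum fun x _ => ?_
          refine (Nat.mul_le_mul_right _ (cnt_exists _)).trans ?_
          rw [Finset.sum_mul]
          exact Finset.sum_le_sum fun c _ => key _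
      _ = _ := by
          simp only [Finset.sum_const, Finset.card_univ, Fintype.card_fun, smul_eq_mul]
          ring

theorem cnt_fiber {W : Type} [AddCommGroup W] [Module F W] (T : U →ₗ[F] W) (y₀ : U) :
    cnt (fun y => T y = T y₀) = cnt (fun y => T y = 0) := by
  apply le_antisymm
  · refine cnt_inj (fun a => a - y₀) sub_left_injective ?_
    intro a ha
    rw [map_sub, ha, sub_self]
  · refine cnt_inj (fun a => a + y₀) (add_left_injective _) ?_
    intro a ha
    rw [map_add, ha, zero_add]

theorem cnt_range {W : Type} [AddCommGroup W] [Module F W] [Fintype W] (T T' : U →ₗ[F] W)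
    (h : LinearMap.range T = LinearMap.range T') (P : W → Prop) :
    cnt (fun y => P (T y)) = cnt (fun y => P (T' y)) := by
  classical
  have hker : cnt (fun y => T y = 0) = cnt (fun y => T' y = 0) := by
    have h1 := card_ker_mul T
    have h2 := card_ker_mul T'
    rw [h, ← h2] at h1
    exact Nat.eq_of_mul_eq_mul_right (Nat.pow_pos Fintype.card_pos) h1
  have hfib : ∀ v, cnt (fun y => T y = v) = cnt (fun y => T' y = v) := by
    intro v
    by_cases hv : v ∈ LinearMap.range T
    · have hv' := hv
      rw [h] at hv'
      obtain ⟨y, rfl⟩ := hv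
      obtain ⟨y', hy'⟩ := hv'
      rw [cnt_fiber, ← hy', cnt_fiber, hker]
    · have hv' := hv
      rw [h] at hv'
      have e1 : cnt (fun y => T y = v) = 0 := by
        simp only [LinearMap.mem_range, not_exists] at hv
        simp [cnt, hv]
      have e2 : cnt (fun y => T' y = v) = 0 := by
        simp only [LinearMap.mem_range, not_exists] at hv'
        simp [cnt, hv']
      rw [e1, e2]
  have hsum : ∀ T : U →ₗ[F] W, cnt (fun y => P (T y)) =
      ∑ v, if P v then cnt (fun y => T y = v) else 0 := by
    intro T
    simp_rw [cnt_eq_sum]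
    have : ∀ v, (if P v then ∑ y, (if T y = v then 1 else 0) else 0) =
        ∑ y, if T y = v then (if P v then 1 else 0) else 0 := by
      intro v
      split_ifs <;> simp
    simp_rw [this]
    rw [Finset.sum_comm]
    simp
  rw [hsum, hsum]
  simp_rw [hfib]

theorem range_eq_of_ann {ν : Type} [Fintype ν] (A A' : ν → (U →ₗ[F] F))
    (h : ∀ c : ν → F, ∑ i, c i • A' i = 0 → ∑ i, c i • A i = 0) :
    LinearMap.range (LinearMap.pi A) ≤ LinearMap.range (LinearMap.pi A') := by
  classical
  rintro _ ⟨y, rfl⟩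
  by_contra hcon
  obtain ⟨f, hf1, hf2⟩ := Submodule.exists_le_ker_of_notMem hcon
  have hf : ∀ v : ν → F, f v = ∑ i, f (Pi.single i 1) * v i := by
    intro v
    conv_lhs => rw [← Finset.univ_sum_single v, map_sum]
    refine Finset.sum_congr rfl fun i _ => ?_
    have : (Pi.single i (v i) : ν → F) = v i • Pi.single i 1 := by
      rw [← Pi.single_smul, smul_eq_mul, mul_one]
    rw [this, map_smul, smul_eq_mul, mul_comm]
  have h0 : ∑ i, f (Pi.single i 1) • A' i = 0 := by
    ext z
    have := hf2 ⟨z, rfl⟩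
    rw [LinearMap.mem_ker, hf] at this
    simpa using this
  have h1 := LinearMap.congr_fun (h _ h0) y
  apply hf1
  rw [hf]
  simpa using h1

end core

theorem core_thm (k : ℕ) : ∃ p : ℕ → ℕ, PolyB p ∧
    ∀ (F : Type) [Field F] [Fintype F] (G : Fin k → Type)
      [∀ i, AddCommGroup (G i)] [∀ i, Module F (G i)] [∀ i, Fintype (G i)]
      (U : Type) [AddCommGroup U] [Module F U] [Fintype U] (r : ℕ)
      (A : (∀ i, G i) → Fin r → (U →ₗ[F] F)) (b : (∀ i, G i) → (Fin r → F)),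
      (∀ i, IsMultiaffine F (fun x => A x i)) → IsMultiaffine F b → ∀ t : ℕ,
      ∃ (s : ℕ) (β : (∀ i, G i) → (Fin s → F)) (Bad : (∀ i, G i) → Prop),
        s ≤ p (r + t) ∧ IsMultiaffine F β ∧
        cnt Bad * Fintype.card F ^ t ≤ Fintype.card (∀ i, G i) ∧
        ∀ x, ¬ Bad x → ∀ x', β x' = β x → ∀ S : Set (Fin r → F),
          cnt (fun y => (fun i => A x' i y) + b x' ∈ S) =
          cnt (fun y => (fun i => A x i y) + b x ∈ S) := by
  obtain ⟨p, hp, hsim⟩ := simul (Fin k) _ univ rfl (fun _ _ _ _ => Finset.mem_univ _)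
  refine ⟨fun n => p (n + 1) + ((n + 1) * n + n), (hp.comp (PolyB.id.add (PolyB.const 1))).add
    (((PolyB.id.add (PolyB.const 1)).mul PolyB.id).add PolyB.id), ?_⟩
  intro F _ _ G _ _ _ U _ _ _ r A b hA hb t
  classical
  set q := Fintype.card F with hq
  have hq2 : 2 ≤ q := two_le_card
  have hdec := fun i => ma_decomp (F := F) (G := G) univ (U →ₗ[F] F) (fun x => A x i) (hA i)
    (by simp)
  choose Φ hΦ hΦs using hdec
  simp only [Finset.powerset_univ] at hΦs
  obtain ⟨σ, fσ, β, T, hσ, hβ, hbad⟩ := hsim F G (U →ₗ[F] F) (Fin r) Φ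
    (fun i I _ => hΦ i I (Finset.subset_univ _)) (t + 1) (r + t + 1) (by
      rw [Fintype.card_fin]; omega)
  simp only [← hΦs] at hbad
  obtain ⟨y, hy⟩ := choose_pts A (r + t + 1)
  let τ := σ ⊕ ((Fin (r + t + 1) × Fin r) ⊕ Fin r)
  let B : (∀ i, G i) → τ → F := fun x => Sum.elim (fun j => β j x)
    (Sum.elim (fun p => A x p.2 (y p.1)) (fun i => b x i))
  let e := Fintype.equivFin τ
  refine ⟨Fintype.card τ, fun x j => B x (e.symm j), fun x =>
    (¬ ∀ c : Fin r → F, ∑ i, c i • A x i = 0 → ∀ x',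
          (∀ j, β j x' = β j x) → ∑ i, c i • A x' i = 0) ∨
    (∃ c : Fin r → F, ∑ i, c i • A x i ≠ 0 ∧
      ∀ j, (∑ i, c i • A x i) (y j) = 0), ?_, ?_, ?_, ?_⟩
  · simp only [τ, Fintype.card_sum, Fintype.card_prod, Fintype.card_fin]
    refine Nat.add_le_add hσ ?_
    refine Nat.add_le_add (Nat.mul_le_mul_left _ (by omega)) (by omega)
  · refine ma_pi _ fun j => ?_
    rcases e.symm j with j | ⟨j, i⟩ | i
    · exact (hβ j).ma
    · have := hA i
      rw [ma_iff] at this ⊢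
      intro i' x
      refine ⟨fun a b => ?_, fun c a => ?_⟩
      · exact LinearMap.congr_fun ((this i' x).1 a b) (y j)
      · exact LinearMap.congr_fun ((this i' x).2 c a) (y j)
    · exact ma_proj b hb i
  · refine Nat.le_of_mul_le_mul_left ?_ (show 0 < q by omega)
    refine le_trans (Nat.mul_le_mul_left _ (Nat.mul_le_mul_right _ (cnt_or _ _))) ?_
    rw [Fintype.card_fin] at hy
    set b1 := cnt (fun x => ¬ ∀ c : Fin r → F, ∑ i, c i • A x i = 0 → ∀ x',
          (∀ j, β j x' = β j x) → ∑ i, c i • A x' i = 0)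
    set b2 := cnt (fun x => ∃ c : Fin r → F, ∑ i, c i • A x i ≠ 0 ∧
      ∀ j, (∑ i, c i • A x i) (y j) = 0)
    have hy' : b2 * q ^ (t + 1) ≤ Fintype.card (∀ i, G i) := by
      refine Nat.le_of_mul_le_mul_left ?_ (Nat.pow_pos (n := r) (show 0 < q by omega))
      calc _ = b2 * q ^ (r + t + 1) := by ring
        _ ≤ _ := hy
        _ = _ := mul_comm _ _
    calc _ = b1 * q ^ (t + 1) + b2 * q ^ (t + 1) := by ring
      _ ≤ Fintype.card (∀ i, G i) + Fintype.card (∀ i, G i) := Nat.add_le_add hbad hy'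
      _ ≤ _ := by nlinarith
  · intro x hx x' hxx' S
    rw [not_or, not_not] at hx
    have hB : ∀ j, B x' j = B x j := by
      intro j
      have := congrFun hxx' (e j)
      simpa using this
    have hann1 : ∀ c : Fin r → F, ∑ i, c i • A x i = 0 → ∑ i, c i • A x' i = 0 := fun c hc =>
      hx.1 c hc x' (fun j => hB (Sum.inl j))
    have hann2 : ∀ c : Fin r → F, ∑ i, c i • A x' i = 0 → ∑ i, c i • A x i = 0 := by
      intro c hc
      by_contra hne
      apply hx.2
      refine ⟨c, hne, fun j => ?_⟩
      refine Eq.trans ?_ (LinearMap.congr_fun hc (y j))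
      simp only [LinearMap.sum_apply, LinearMap.smul_apply]
      refine Finset.sum_congr rfl fun i _ => ?_
      rw [show A x i (y j) = A x' i (y j) from (hB (Sum.inr (Sum.inl (j, i)))).symm]
    have hbb : b x' = b x := funext fun i => hB (Sum.inr (Sum.inr i))
    have hr := le_antisymm (range_eq_of_ann (A x') (A x) hann1)
      (range_eq_of_ann (A x) (A x') hann2)
    rw [hbb]
    exact cnt_range (LinearMap.pi (A x')) (LinearMap.pi (A x)) hr (fun v => v + b x ∈ S)

theorem approx {Ω V : Type} [Fintype Ω] [Fintype V] (β : Ω → V) (X : Set Ω) (Bad : Ω → Prop)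
    (E : ℝ) (hB : (cnt Bad : ℝ) ≤ E)
    (hg : ∀ x, ¬ Bad x → ∀ x', β x' = β x → (x ∈ X ↔ x' ∈ X)) :
    (∃ (m : ℕ) (μ : Fin m → V), (∀ j, {x | β x = μ j} ⊆ X) ∧
      (Nat.card ↥(X \ ⋃ j, {x | β x = μ j}) : ℝ) ≤ E) ∧
    (∃ (m : ℕ) (μ : Fin m → V), X ⊆ (⋃ j, {x | β x = μ j}) ∧
      (Nat.card ↥((⋃ j, {x | β x = μ j}) \ X) : ℝ) ≤ E) := by
  classical
  have hcard : ∀ Y : Set Ω, (∀ x ∈ Y, Bad x) → (Nat.card ↥Y : ℝ) ≤ E := by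
    intro Y hY
    refine le_trans ?_ hB
    rw [cnt_eq_natCard]
    exact_mod_cast Nat.card_le_card_of_injective (fun y : Y => (⟨y.1, hY y.1 y.2⟩ : {x // Bad x}))
      (fun a b h => Subtype.ext (Subtype.mk.inj h))
  constructor
  · let e := Fintype.equivFin {v : V // ∀ x, β x = v → x ∈ X}
    refine ⟨_, fun j => (e.symm j).1, fun j x hx => (e.symm j).2 x hx, hcard _ ?_⟩
    rintro x ⟨hxX, hx⟩
    by_contra hbad
    apply hx
    refine Set.mem_iUnion.2 ⟨e ⟨β x, fun x' h => (hg x hbad x' h).1 hxX⟩, ?_⟩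
    simp
  · let e := Fintype.equivFin {v : V // ∃ x, β x = v ∧ x ∈ X}
    refine ⟨_, fun j => (e.symm j).1, fun x hx => ?_, hcard _ ?_⟩
    · refine Set.mem_iUnion.2 ⟨e ⟨β x, x, rfl, hx⟩, ?_⟩
      simp
    · rintro x ⟨hx, hxX⟩
      by_contra hbad
      obtain ⟨j, hj⟩ := Set.mem_iUnion.1 hx
      obtain ⟨x', h1, h2⟩ := (e.symm j).2
      exact hxX ((hg x hbad x' (h1.trans (Eq.symm hj))).2 h2)

theorem ma_const_zero {F : Type} [Field F] {ι : Type} [Fintype ι] [DecidableEq ι] {G : ι → Type}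
    [∀ i, AddCommGroup (G i)] [∀ i, Module F (G i)] {W : Type} [AddCommGroup W] [Module F W] :
    IsMultiaffine F (fun _ : (∀ i, G i) => (0 : W)) :=
  fun _ _ => ⟨0, 0, fun _ => by simp⟩

theorem bound_aux {r t a s : ℕ} {L : ℝ} (hr : 1 ≤ r) (hL : 1 ≤ L) (ht : (t : ℝ) ≤ L)
    (hs : s ≤ (r + t + 2) ^ a) :
    (s : ℝ) ≤ 5 ^ (2 * (a + 1)) * ((r : ℝ) * L) ^ (2 * (a + 1)) := by
  have hr' : (1 : ℝ) ≤ r := by exact_mod_cast hr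
  have h1 : (r : ℝ) + t + 2 ≤ 5 * (r * L) := by nlinarith
  have h2 : (1 : ℝ) ≤ 5 * (r * L) := by
    have : (0 : ℝ) ≤ t := Nat.cast_nonneg t
    linarith
  calc (s : ℝ) ≤ ((r : ℝ) + t + 2) ^ a := by exact_mod_cast hs
    _ ≤ (5 * (r * L)) ^ a := by gcongr
    _ ≤ (5 * (r * L)) ^ (2 * (a + 1)) := pow_le_pow_right₀ h2 (by omega)
    _ = _ := mul_pow _ _ _

theorem t_aux {q : ℕ} (hq : 2 ≤ q) {ε : ℝ} (h0 : 0 < ε) (h1 : ε ≤ 1) :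
    ∃ t : ℕ, (t : ℝ) ≤ Real.logb q ((q : ℝ) * ε⁻¹) ∧ 1 ≤ Real.logb q ((q : ℝ) * ε⁻¹) ∧
      1 ≤ ε * (q : ℝ) ^ t := by
  have hq1 : (1 : ℝ) < q := by exact_mod_cast hq
  have hi : 1 ≤ ε⁻¹ := (one_le_inv₀ h0).2 h1
  have hl : 0 ≤ Real.logb q ε⁻¹ := Real.logb_nonneg hq1 hi
  have he : Real.logb q ((q : ℝ) * ε⁻¹) = 1 + Real.logb q ε⁻¹ := by
    rw [Real.logb_mul (by positivity) (by positivity), Real.logb_self_eq_one hq1]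
  refine ⟨⌈Real.logb q ε⁻¹⌉₊, ?_, by linarith, ?_⟩
  · rw [he]
    have := Nat.ceil_lt_add_one hl
    linarith
  · have h2 : ε⁻¹ ≤ (q : ℝ) ^ ⌈Real.logb q ε⁻¹⌉₊ := by
      rw [← Real.rpow_natCast, ← Real.logb_le_iff_le_rpow hq1 (by positivity)]
      exact Nat.le_ceil _
    calc (1 : ℝ) = ε * ε⁻¹ := (mul_inv_cancel₀ h0.ne').symm
      _ ≤ _ := by gcongr

/-- The linear part of a multiaffine map in the last coordinate. -/
def lastLin {k : ℕ} {F : Type} [Field F] {G : Fin (k + 1) → Type} [∀ i, AddCommGroup (G i)]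
    [∀ i, Module F (G i)] {r : ℕ} {α : (∀ i, G i) → (Fin r → F)} (hα : IsMultiaffine F α)
    (x : ∀ i : Fin k, G i.castSucc) (j : Fin r) : G (Fin.last k) →ₗ[F] F where
  toFun y := α (Fin.snoc x y) j - α (Fin.snoc x 0) j
  map_add' a b := by
    have h := congrFun (((ma_iff α).1 hα (Fin.last k) (Fin.snoc x 0)).1 a b) j
    simp only [Fin.update_snoc_last, Pi.add_apply] at h
    rw [eq_sub_of_add_eq h]
    abel
  map_smul' c a := by
    have h := congrFun (((ma_iff α).1 hα (Fin.last k) (Fin.snoc x 0)).2 c a) j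
    simp only [Fin.update_snoc_last] at h
    exact h

theorem ma_snoc {k : ℕ} {F : Type} [Field F] {G : Fin (k + 1) → Type} [∀ i, AddCommGroup (G i)]
    [∀ i, Module F (G i)] {r : ℕ} {α : (∀ i, G i) → (Fin r → F)} (hα : IsMultiaffine F α)
    (y : G (Fin.last k)) :
    IsMultiaffine F (fun x : ∀ i : Fin k, G i.castSucc => α (Fin.snoc x y)) := by
  intro i x
  obtain ⟨g, h, hg⟩ := hα i.castSucc (Fin.snoc x y)
  refine ⟨g, h, fun z => ?_⟩
  rw [← hg z]
  exact congrArg α (Fin.snoc_update (α := G) ..)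

theorem main_thm (k : ℕ) : ∃ a : ℕ,
      ∀ (𝔽 : Type) [Field 𝔽] [Fintype 𝔽]
        (G : Fin (k + 1) → Type) [∀ i, AddCommGroup (G i)] [∀ i, Module 𝔽 (G i)]
        [∀ i, Fintype (G i)]
        (r : ℕ) (α : (∀ i, G i) → (Fin r → 𝔽)), IsMultiaffine 𝔽 α →
      ∀ (S : Set (Fin r → 𝔽)) (ε : ℝ), 0 < ε →
      ∀ X : Set (∀ i : Fin k, G i.castSucc),
        X = {x | ε * Fintype.card (G (Fin.last k)) ≤
              (Nat.card {y : G (Fin.last k) | α (Fin.snoc x y) ∈ S} : ℝ)} →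
      ∃ s : ℕ,
        (s : ℝ) ≤ 5 ^ (2 * (a + 1)) * ((r : ℝ) *
          Real.logb (Fintype.card 𝔽) ((Fintype.card 𝔽 : ℝ) * ε⁻¹)) ^ (2 * (a + 1)) ∧
        ∃ β : (∀ i : Fin k, G i.castSucc) → (Fin s → 𝔽), IsMultiaffine 𝔽 β ∧
        ∃ Bad : (∀ i : Fin k, G i.castSucc) → Prop,
          (cnt Bad : ℝ) ≤ ε * Fintype.card (∀ i : Fin k, G i.castSucc) ∧
          ∀ x, ¬ Bad x → ∀ x', β x' = β x → (x ∈ X ↔ x' ∈ X) := by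
  obtain ⟨p, ⟨a, ha⟩, hcore⟩ := core_thm k
  refine ⟨a, ?_⟩
  intro 𝔽 _ _ G _ _ _ r α hα S ε hε X hX
  have triv : (∀ x x', x ∈ X ↔ x' ∈ X) → ∃ s : ℕ,
        (s : ℝ) ≤ 5 ^ (2 * (a + 1)) * ((r : ℝ) *
          Real.logb (Fintype.card 𝔽) ((Fintype.card 𝔽 : ℝ) * ε⁻¹)) ^ (2 * (a + 1)) ∧
        ∃ β : (∀ i : Fin k, G i.castSucc) → (Fin s → 𝔽), IsMultiaffine 𝔽 β ∧
        ∃ Bad : (∀ i : Fin k, G i.castSucc) → Prop,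
          (cnt Bad : ℝ) ≤ ε * Fintype.card (∀ i : Fin k, G i.castSucc) ∧
          ∀ x, ¬ Bad x → ∀ x', β x' = β x → (x ∈ X ↔ x' ∈ X) := by
    intro h
    refine ⟨0, ?_, fun _ => 0, ma_const_zero, fun _ => False, ?_, fun x _ x' _ => h x x'⟩
    · rw [Nat.cast_zero]
      refine mul_nonneg (by positivity) (Even.pow_nonneg (even_two_mul _) _)
    · have : cnt (fun _ : (∀ i : Fin k, G i.castSucc) => False) = 0 := by simp [cnt]
      rw [this, Nat.cast_zero]
      positivity
  by_cases hε1 : ε ≤ 1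
  swap
  · apply triv
    have : X = ∅ := by
      rw [hX, Set.eq_empty_iff_forall_notMem]
      intro x hx
      have h1 : (Nat.card {y : G (Fin.last k) | α (Fin.snoc x y) ∈ S} : ℝ) ≤
          Fintype.card (G (Fin.last k)) := by
        have := cnt_le_card (fun y : G (Fin.last k) => α (Fin.snoc x y) ∈ S)
        rw [cnt_eq_natCard] at this
        exact_mod_cast this
      have h2 : (0 : ℝ) < Fintype.card (G (Fin.last k)) := by exact_mod_cast Fintype.card_pos
      have h3 : ε * Fintype.card (G (Fin.last k)) ≤ _ := hx
      push Not at hε1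
      nlinarith
    simp [this]
  rcases Nat.eq_zero_or_pos r with hr | hr
  · subst hr
    apply triv
    intro x x'
    rw [hX]
    have : ∀ y, α (Fin.snoc x y) = α (Fin.snoc x' y) := fun y => Subsingleton.elim _ _
    simp only [Set.mem_ofPred_eq, this]
  obtain ⟨t, ht1, hL, ht2⟩ := t_aux (two_le_card (F := 𝔽)) hε hε1
  obtain ⟨s, β, Bad, hs, hβ, hbad, hgood⟩ := hcore 𝔽 (fun i => G i.castSucc) (G (Fin.last k)) r
    (fun x j => lastLin hα x j) (fun x => α (Fin.snoc x 0)) (by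
      intro j
      rw [ma_iff]
      intro i x
      have h1 := fun y => (ma_iff _).1 (ma_proj _ (ma_snoc hα y) j) i x
      refine ⟨fun a b => ?_, fun c a => ?_⟩
      · ext y
        have e1 := (h1 y).1 a b
        have e2 := (h1 0).1 a b
        simp only [LinearMap.add_apply, lastLin, LinearMap.coe_mk, AddHom.coe_mk]
        linear_combination e1 - e2
      · ext y
        have e1 := (h1 y).2 c a
        have e2 := (h1 0).2 c a
        simp only [smul_eq_mul] at e1 e2
        simp only [LinearMap.sub_apply, LinearMap.smul_apply, lastLin, LinearMap.coe_mk,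
          AddHom.coe_mk, smul_eq_mul]
        linear_combination e1 - e2) (ma_snoc hα 0) t
  refine ⟨s, bound_aux hr hL ht1 (hs.trans (ha _)), β, hβ, Bad, ?_, ?_⟩
  · have h1 : (cnt Bad : ℝ) * (Fintype.card 𝔽 : ℝ) ^ t ≤
        Fintype.card (∀ i : Fin k, G i.castSucc) := by exact_mod_cast hbad
    have h2 : (0 : ℝ) ≤ cnt Bad := Nat.cast_nonneg _
    calc (cnt Bad : ℝ) = cnt Bad * 1 := (mul_one _).symm
      _ ≤ cnt Bad * (ε * (Fintype.card 𝔽 : ℝ) ^ t) := by gcongr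
      _ = ε * (cnt Bad * (Fintype.card 𝔽 : ℝ) ^ t) := by ring
      _ ≤ _ := by gcongr
  · intro x hx x' hxx'
    have h := hgood x hx x' hxx' S
    have hval : ∀ x : (∀ i : Fin k, G i.castSucc), ∀ y,
        (fun j => lastLin hα x j y) + α (Fin.snoc x 0) = α (Fin.snoc x y) := by
      intro x y
      funext j
      simp [lastLin]
    simp only [hval] at h
    rw [cnt_eq_natCard, cnt_eq_natCard] at h
    have h' : (Nat.card {y : G (Fin.last k) | α (Fin.snoc x' y) ∈ S}) =
      Nat.card {y : G (Fin.last k) | α (Fin.snoc x y) ∈ S} := h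
    rw [hX]
    simp only [Set.mem_ofPred_eq] at h' ⊢
    rw [h']

end helpers

/-- **Structure of the set of dense columns of a variety.**
For every number `k + 1 ≥ 1` of coordinates there are constants `C, D > 0` such that:
for every multiaffine `α : G 0 × ⋯ × G k → 𝔽^r`, every `S ⊆ 𝔽^r` and `ε > 0`, the set
`X` of `ε`-dense columns, i.e. of those `x ∈ G 0 × ⋯ × G (k-1)` for which
`α (x, y) ∈ S` for at least `ε |G k|` values `y ∈ G k`, is both internally and
externally `ε`-approximated by layers of a multiaffine map
`β : G 0 × ⋯ × G (k-1) → 𝔽^s` with `s ≤ C (r log_{|𝔽|}(|𝔽| ε⁻¹))^D`. -/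
theorem dense_columns_structure :
    ∀ k : ℕ, ∃ C D : ℝ, 0 < C ∧ 0 < D ∧
      ∀ (𝔽 : Type) [Field 𝔽] [Fintype 𝔽]
        (G : Fin (k + 1) → Type) [∀ i, AddCommGroup (G i)] [∀ i, Module 𝔽 (G i)]
        [∀ i, Fintype (G i)] [∀ i, FiniteDimensional 𝔽 (G i)]
        (r : ℕ) (α : (∀ i, G i) → (Fin r → 𝔽)), IsMultiaffine 𝔽 α →
      ∀ (S : Set (Fin r → 𝔽)) (ε : ℝ), 0 < ε →
      ∀ X : Set (∀ i : Fin k, G i.castSucc),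
        X = {x | ε * Fintype.card (G (Fin.last k)) ≤
              (Nat.card {y : G (Fin.last k) | α (Fin.snoc x y) ∈ S} : ℝ)} →
      ∃ s : ℕ,
        (s : ℝ) ≤ C * ((r : ℝ) *
          Real.logb (Fintype.card 𝔽) ((Fintype.card 𝔽 : ℝ) * ε⁻¹)) ^ D ∧
        ∃ β : (∀ i : Fin k, G i.castSucc) → (Fin s → 𝔽), IsMultiaffine 𝔽 β ∧
          -- internal ε-approximation of X by layers of β
          (∃ (m : ℕ) (μ : Fin m → (Fin s → 𝔽)),
            (∀ j, {x | β x = μ j} ⊆ X) ∧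
            (Nat.card ↥(X \ ⋃ j, {x | β x = μ j}) : ℝ)
              ≤ ε * Fintype.card (∀ i : Fin k, G i.castSucc)) ∧
          -- external ε-approximation of X by layers of β
          (∃ (m : ℕ) (μ : Fin m → (Fin s → 𝔽)),
            X ⊆ (⋃ j, {x | β x = μ j}) ∧
            (Nat.card ↥((⋃ j, {x | β x = μ j}) \ X) : ℝ)
              ≤ ε * Fintype.card (∀ i : Fin k, G i.castSucc)) := by
  intro k
  obtain ⟨a, h⟩ := main_thm k
  refine ⟨5 ^ (2 * (a + 1)), ((2 * (a + 1) : ℕ) : ℝ), by positivity, by positivity, ?_⟩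
  intro 𝔽 _ _ G _ _ _ _ r α hα S ε hε X hX
  obtain ⟨s, hs, β, hβ, Bad, hB, hg⟩ := h 𝔽 G r α hα S ε hε X hX
  rw [Real.rpow_natCast]
  exact ⟨s, hs, β, hβ, approx β X Bad _ hB hg⟩
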